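/- arXiv:1908.05882 — 2 statements merged into one kernel-verified Lean document; each statement's English description precedes it below -/
import Mathlib

section
/- Carleman inequality with linear weight (Lemma 2.1). Let n ≥ 2 and let Ω = {x = (x',x_n) ∈ ℝⁿ : a < x_n < b} for some real numbers a < b. Let A : Ω → ℂⁿ be bounded and Lipschitz and q : Ω → ℂ be bounded measurable. Then there exist a constant C > 0 and h₀ ∈ (0,1) such that for all h ∈ (0,h₀) and all w ∈ C_c^∞(Ω): h·‖w‖_{L²(Ω)} ≤ C·‖e^{x_n/h} h⁴ L_{A,q}(e^{−x_n/h} w)‖_{L²(Ω)}. -/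
open MeasureTheory Real Set

noncomputable section

def pd {n : ℕ} (j : Fin n) (u : EuclideanSpace ℝ (Fin n) → ℂ) :
    EuclideanSpace ℝ (Fin n) → ℂ :=
  fun x => fderiv ℝ u x (EuclideanSpace.single j 1)

def pdR {n : ℕ} (j : Fin n) (φ : EuclideanSpace ℝ (Fin n) → ℝ) :
    EuclideanSpace ℝ (Fin n) → ℝ :=
  fun x => fderiv ℝ φ x (EuclideanSpace.single j 1)

def opL {n : ℕ} (A : EuclideanSpace ℝ (Fin n) → Fin n → ℂ)
    (q : EuclideanSpace ℝ (Fin n) → ℂ) (u : EuclideanSpace ℝ (Fin n) → ℂ) :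
    EuclideanSpace ℝ (Fin n) → ℂ :=
  fun x => (∑ j : Fin n, (pd j)^[4] u x)
    - Complex.I * (∑ j : Fin n, A x j * pd j u x) + q x * u x

def IsCcInfty {n : ℕ} (Ω : Set (EuclideanSpace ℝ (Fin n)))
    (w : EuclideanSpace ℝ (Fin n) → ℂ) : Prop :=
  ContDiff ℝ (⊤ : ℕ∞) w ∧ HasCompactSupport w ∧ tsupport w ⊆ Ω

def l2sq {n : ℕ} (Ω : Set (EuclideanSpace ℝ (Fin n)))
    (f : EuclideanSpace ℝ (Fin n) → ℂ) : ℝ :=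
  ∫ x in Ω, ‖f x‖ ^ 2

def l2norm {n : ℕ} (Ω : Set (EuclideanSpace ℝ (Fin n)))
    (f : EuclideanSpace ℝ (Fin n) → ℂ) : ℝ :=
  Real.sqrt (l2sq Ω f)

def gradsq {n : ℕ} (Ω : Set (EuclideanSpace ℝ (Fin n)))
    (w : EuclideanSpace ℝ (Fin n) → ℂ) : ℝ :=
  ∫ x in Ω, ∑ j : Fin n, ‖pd j w x‖ ^ 2

def BddLipOn {n : ℕ} (Ω : Set (EuclideanSpace ℝ (Fin n)))
    (A : EuclideanSpace ℝ (Fin n) → Fin n → ℂ) : Prop :=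
  (∃ M, ∀ x ∈ Ω, ‖A x‖ ≤ M) ∧ ∃ K, LipschitzOnWith K A Ω

def BddMeasOn {n : ℕ} (Ω : Set (EuclideanSpace ℝ (Fin n)))
    (q : EuclideanSpace ℝ (Fin n) → ℂ) : Prop :=
  Measurable q ∧ ∃ M, ∀ x ∈ Ω, ‖q x‖ ≤ M

def derivsL2 {n : ℕ} (Ω : Set (EuclideanSpace ℝ (Fin n)))
    (u : EuclideanSpace ℝ (Fin n) → ℂ) : Prop :=
  ∀ js : List (Fin n), js.length ≤ 4 →
    IntegrableOn (fun x => ‖(js.foldr pd u) x‖ ^ 2) Ω volume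

def symA {n : ℕ} (φ : EuclideanSpace ℝ (Fin n) → ℝ)
    (x ξ : EuclideanSpace ℝ (Fin n)) : ℝ :=
  ∑ j : Fin n, ((ξ j) ^ 4 - 6 * (pdR j φ x) ^ 2 * (ξ j) ^ 2 + (pdR j φ x) ^ 4)

def symB {n : ℕ} (φ : EuclideanSpace ℝ (Fin n) → ℝ)
    (x ξ : EuclideanSpace ℝ (Fin n)) : ℝ :=
  ∑ j : Fin n, (4 * pdR j φ x * (ξ j) ^ 3 - 4 * (pdR j φ x) ^ 3 * ξ j)

def poisson {n : ℕ} (φ : EuclideanSpace ℝ (Fin n) → ℝ)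
    (x ξ : EuclideanSpace ℝ (Fin n)) : ℝ :=
  ∑ k : Fin n,
    (fderiv ℝ (fun ξ' => symA φ x ξ') ξ (EuclideanSpace.single k 1) *
       fderiv ℝ (fun y => symB φ y ξ) x (EuclideanSpace.single k 1) -
     fderiv ℝ (fun y => symA φ y ξ) x (EuclideanSpace.single k 1) *
       fderiv ℝ (fun ξ' => symB φ x ξ') ξ (EuclideanSpace.single k 1))

/-!
Conjugation by `e^{x_N/h}` turns `h ∂_j` into `h ∂_j - δ_{jN}`, so `h⁴ ∑ j, ∂_j⁴` becomes the
constant coefficient operator with symbol `∑ j, (i η_j - δ_{jN})⁴`, where `η = 2 π h ξ`. This symbol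
is bounded below by a multiple of `|1 - η_N²|`, so by Plancherel the operator dominates
`h² ∂_N² + 1`. On functions supported in a slab of width `b - a`, the latter is bounded below by
`h / (b - a)`: integrate the energy `h² |∂_N u|² + |u|²` against `x_N - a`. The symbol also
dominates `|η|` up to a constant, so the lower order terms, which carry a factor `h³` after
conjugation, are absorbed at the cost of one power of `h`.
-/

open SchwartzMap FourierTransform LineDeriv
open scoped ENNReal

section LTwo

variable {X E : Type*} [MeasurableSpace X] {μ : Measure X} [NormedAddCommGroup E]

lemma integral_norm_sq_le_two_mul_integral_norm_add_sq {f g : X → E}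
    (hf : MemLp f 2 μ) (hg : MemLp g 2 μ) :
    ∫ x, ‖f x‖ ^ 2 ∂μ ≤ 2 * ∫ x, ‖f x + g x‖ ^ 2 ∂μ + 2 * ∫ x, ‖g x‖ ^ 2 ∂μ := by
  have hfg : Integrable (fun x => 2 * ‖f x + g x‖ ^ 2) μ :=
    ((hf.add hg).integrable_norm_pow two_ne_zero).const_mul 2
  have hg' : Integrable (fun x => 2 * ‖g x‖ ^ 2) μ :=
    (hg.integrable_norm_pow two_ne_zero).const_mul 2
  rw [← integral_const_mul, ← integral_const_mul, ← integral_add hfg hg']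
  refine integral_mono (hf.integrable_norm_pow two_ne_zero) (hfg.add hg') fun x => ?_
  calc ‖f x‖ ^ 2 ≤ (‖f x + g x‖ + ‖g x‖) ^ 2 := by
        gcongr
        simpa using norm_sub_le (f x + g x) (g x)
    _ ≤ 2 * (‖f x + g x‖ ^ 2 + ‖g x‖ ^ 2) := add_sq_le
    _ = 2 * ‖f x + g x‖ ^ 2 + 2 * ‖g x‖ ^ 2 := mul_add ..

lemma integrable_mul_of_abs_le_on_support {f g : X → ℝ} {C : ℝ} (hf : AEStronglyMeasurable f μ)
    (hg : Integrable g μ) (hfg : ∀ x ∈ Function.support g, |f x| ≤ C) :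
    Integrable (fun x => f x * g x) μ := by
  refine (hg.norm.const_mul C).mono' (hf.mul hg.1) (.of_forall fun x => ?_)
  by_cases hx : g x = 0
  · simp [hx]
  · rw [norm_mul]
    exact mul_le_mul_of_nonneg_right (hfg x hx) (norm_nonneg _)

end LTwo

lemma integrable_norm_sq_schwartzMap {E F : Type*} [NormedAddCommGroup E] [NormedSpace ℝ E]
    [FiniteDimensional ℝ E] [MeasurableSpace E] [BorelSpace E] {μ : Measure E}
    [μ.HasTemperateGrowth] [NormedAddCommGroup F] [NormedSpace ℝ F] (f : 𝓢(E, F)) :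
    Integrable (fun x => ‖f x‖ ^ 2) μ :=
  (f.memLp 2 μ).integrable_norm_pow two_ne_zero

section Poincare

variable {E F : Type*} [NormedAddCommGroup E] [NormedSpace ℝ E]
  [NormedAddCommGroup F] [InnerProductSpace ℝ F]

lemma lineDerivOp_apply_eq_zero_of_notMem_tsupport {u : 𝓢(E, F)} {x : E} (hx : x ∉ tsupport u)
    (v : E) : ∂_{v} u x = 0 :=
  image_eq_zero_of_notMem_tsupport fun h => hx (tsupport_lineDerivOp_subset v u h)

lemma differentiable_norm_lineDeriv_sq_add_norm_sq (u : 𝓢(E, F)) (v : E) :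
    Differentiable ℝ (fun y => ‖∂_{v} u y‖ ^ 2 + ‖u y‖ ^ 2) :=
  ((∂_{v} u).differentiable.norm_sq ℝ).fun_add (u.differentiable.norm_sq ℝ)

lemma fderiv_norm_lineDeriv_sq_add_norm_sq_apply (u : 𝓢(E, F)) (x v : E) :
    fderiv ℝ (fun y => ‖∂_{v} u y‖ ^ 2 + ‖u y‖ ^ 2) x v =
      2 * inner ℝ (∂_{v} u x) ((∂_{v} (∂_{v} u) + u) x) := by
  have h_deriv : HasFDerivAt (fun y => ‖∂_{v} u y‖ ^ 2) _ x :=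
    (∂_{v} u).differentiableAt.hasFDerivAt.norm_sq
  have h_self : HasFDerivAt (fun y => ‖u y‖ ^ 2) _ x := u.differentiableAt.hasFDerivAt.norm_sq
  rw [(h_deriv.fun_add h_self).fderiv]
  simp [← lineDerivOp_apply_eq_fderiv, inner_add_right, real_inner_comm (u x), mul_add]

lemma abs_mul_two_inner_le {t L : ℝ} (ht : |t| ≤ L) (v f : F) :
    |t * (2 * inner ℝ v f)| ≤ ‖v‖ ^ 2 + L ^ 2 * ‖f‖ ^ 2 := by
  calc |t * (2 * inner ℝ v f)| = 2 * (|t| * |inner ℝ v f|) := by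
        rw [abs_mul, abs_mul, abs_two]; ring
    _ ≤ 2 * (L * (‖v‖ * ‖f‖)) := by
        have := (abs_nonneg t).trans ht
        gcongr
        exact abs_real_inner_le_norm v f
    _ ≤ ‖v‖ ^ 2 + L ^ 2 * ‖f‖ ^ 2 := by linarith [sq_nonneg (‖v‖ - L * ‖f‖)]

variable [FiniteDimensional ℝ E] [MeasurableSpace E] [BorelSpace E]
  {μ : Measure E} [μ.IsAddHaarMeasure]

lemma integral_sub_mul_fderiv_eq_neg_integral {ℓ : E →L[ℝ] ℝ} {v : E} (hv : ℓ v = 1) (a : ℝ)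
    {e : E → ℝ} (he : Differentiable ℝ e) (int_e : Integrable e μ)
    (int_weight : Integrable (fun x => (ℓ x - a) * e x) μ)
    (int_flux : Integrable (fun x => (ℓ x - a) * fderiv ℝ e x v) μ) :
    ∫ x, (ℓ x - a) * fderiv ℝ e x v ∂μ = -∫ x, e x ∂μ := by
  have fderiv_weight (x : E) : fderiv ℝ (fun y => ℓ y - a) x v = 1 := by
    rw [(ℓ.hasFDerivAt.sub_const a).fderiv, hv]
  have by_parts := integral_mul_fderiv_eq_neg_fderiv_mul_of_integrable (μ := μ) (v := v)
    (f := fun x => ℓ x - a) (g := e)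
  simp only [fderiv_weight, one_mul] at by_parts
  exact by_parts int_e int_flux int_weight (fun x _ => by fun_prop) (fun x _ => he x)

/- The weight `ℓ - a` has `v`-derivative `1`, and the energy `‖∂_v u‖² + ‖u‖²` has `v`-derivative
`2 ⟪∂_v u, ∂_v² u + u⟫`: integrate the product by parts and absorb `‖∂_v u‖²` by AM-GM. -/
theorem integral_norm_sq_le_integral_norm_lineDeriv_lineDeriv_add_sq {ℓ : E →L[ℝ] ℝ} {v : E}
    (hv : ℓ v = 1) {a b : ℝ} {u : 𝓢(E, F)} (hu : ∀ x ∈ tsupport u, ℓ x ∈ Icc a b) :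
    ∫ x, ‖u x‖ ^ 2 ∂μ ≤ (b - a) ^ 2 * ∫ x, ‖(∂_{v} (∂_{v} u) + u) x‖ ^ 2 ∂μ := by
  set g := ∂_{v} (∂_{v} u) + u
  have int_u := integrable_norm_sq_schwartzMap (μ := μ) u
  have int_du := integrable_norm_sq_schwartzMap (μ := μ) (∂_{v} u)
  have int_g := (integrable_norm_sq_schwartzMap (μ := μ) g).const_mul ((b - a) ^ 2)
  have weight_le {x : E} (hx : x ∈ tsupport u) : |ℓ x - a| ≤ b - a := by
    rw [abs_of_nonneg (sub_nonneg.2 (hu x hx).1)]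
    exact sub_le_sub_right (hu x hx).2 a
  have flux_le (x : E) :
      |(ℓ x - a) * (2 * inner ℝ (∂_{v} u x) (g x))| ≤
        ‖∂_{v} u x‖ ^ 2 + (b - a) ^ 2 * ‖g x‖ ^ 2 := by
    by_cases hx : x ∈ tsupport u
    · exact abs_mul_two_inner_le (weight_le hx) _ _
    · rw [lineDerivOp_apply_eq_zero_of_notMem_tsupport hx]
      simp only [inner_zero_left, mul_zero, abs_zero]
      positivity
  have int_flux : Integrable (fun x => (ℓ x - a) * (2 * inner ℝ (∂_{v} u x) (g x))) μ :=
    (int_du.add int_g).mono' (by fun_prop) (.of_forall flux_le)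
  have int_weight : Integrable (fun x => (ℓ x - a) * (‖∂_{v} u x‖ ^ 2 + ‖u x‖ ^ 2)) μ := by
    refine integrable_mul_of_abs_le_on_support (C := b - a) (by fun_prop) (int_du.add int_u)
      fun x hx => weight_le (by_contra fun hx' => hx ?_)
    simp [lineDerivOp_apply_eq_zero_of_notMem_tsupport hx', image_eq_zero_of_notMem_tsupport hx']
  have energy_eq := integral_sub_mul_fderiv_eq_neg_integral hv a
    (differentiable_norm_lineDeriv_sq_add_norm_sq u v) (int_du.add int_u) int_weight
    (by simpa only [fderiv_norm_lineDeriv_sq_add_norm_sq_apply] using int_flux)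
  have energy_le : ∫ x, (‖∂_{v} u x‖ ^ 2 + ‖u x‖ ^ 2) ∂μ ≤
      ∫ x, (‖∂_{v} u x‖ ^ 2 + (b - a) ^ 2 * ‖g x‖ ^ 2) ∂μ := by
    simp only [fderiv_norm_lineDeriv_sq_add_norm_sq_apply] at energy_eq
    rw [← neg_eq_iff_eq_neg.2 energy_eq, ← integral_neg]
    exact integral_mono int_flux.neg (int_du.add int_g) fun x => (neg_le_abs _).trans (flux_le x)
  rw [integral_add int_du int_u, integral_add int_du int_g, integral_const_mul] at energy_le
  linarith

end Poincare

section ShiftedDeriv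

variable {E : Type*} [NormedAddCommGroup E]

/-- The operator `∂_v - c` on Schwartz functions. Multiplication by `e^{-φ}` with `φ` linear
intertwines it, for `c = φ v`, with `∂_v`. -/
def shiftedDeriv [NormedSpace ℝ E] (v : E) (c : ℂ) : 𝓢(E, ℂ) →L[ℂ] 𝓢(E, ℂ) :=
  lineDerivOpCLM ℂ 𝓢(E, ℂ) v - c • ContinuousLinearMap.id ℂ 𝓢(E, ℂ)

lemma shiftedDeriv_apply_apply [NormedSpace ℝ E] (v : E) (c : ℂ) (u : 𝓢(E, ℂ)) (x : E) :
    shiftedDeriv v c u x = fderiv ℝ u x v - c * u x := by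
  simp [shiftedDeriv, lineDerivOp_apply_eq_fderiv]

lemma tsupport_shiftedDeriv_subset [NormedSpace ℝ E] (v : E) (c : ℂ) (u : 𝓢(E, ℂ)) :
    tsupport (shiftedDeriv v c u) ⊆ tsupport u := by
  refine closure_minimal (fun x hx => ?_) (isClosed_tsupport _)
  contrapose! hx
  simp [shiftedDeriv, lineDerivOp_apply_eq_zero_of_notMem_tsupport hx,
    image_eq_zero_of_notMem_tsupport hx]

lemma tsupport_shiftedDeriv_pow_subset [NormedSpace ℝ E] (v : E) (c : ℂ) (k : ℕ) (u : 𝓢(E, ℂ)) :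
    tsupport ((shiftedDeriv v c ^ k) u) ⊆ tsupport u := by
  induction k with
  | zero => simp
  | succ k ih =>
    rw [pow_succ']
    exact (tsupport_shiftedDeriv_subset v c _).trans ih

lemma fderiv_exp_neg_mul_apply [NormedSpace ℝ E] (φ : E →L[ℝ] ℝ) (u : 𝓢(E, ℂ)) (x v : E) :
    fderiv ℝ (fun y => (exp (-φ y) : ℂ) * u y) x v =
      exp (-φ x) * shiftedDeriv v (φ v) u x := by
  have h_exp : HasFDerivAt (fun y => (exp (-φ y) : ℂ)) _ x :=
    HasFDerivAt.comp x Complex.ofRealCLM.hasFDerivAt φ.hasFDerivAt.fun_neg.exp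
  rw [(h_exp.fun_mul u.differentiableAt.hasFDerivAt).fderiv, shiftedDeriv_apply_apply]
  simp
  ring

variable [InnerProductSpace ℝ E] [FiniteDimensional ℝ E] [MeasurableSpace E] [BorelSpace E]

lemma fourier_lineDerivOp_apply (v : E) (u : 𝓢(E, ℂ)) (ξ : E) :
    𝓕 (∂_{v} u) ξ = 2 * π * Complex.I * (inner ℝ ξ v : ℝ) * 𝓕 u ξ := by
  have h_growth : (fun x : E => inner ℝ x v).HasTemperateGrowth := by fun_prop
  rw [SchwartzMap.fourier_lineDerivOp_eq, smul_apply, smulLeftCLM_apply_apply h_growth,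
    smul_eq_mul, Complex.real_smul]
  ring

lemma fourier_shiftedDeriv_apply (v : E) (c : ℂ) (u : 𝓢(E, ℂ)) (ξ : E) :
    𝓕 (shiftedDeriv v c u) ξ = (2 * π * Complex.I * (inner ℝ ξ v : ℝ) - c) * 𝓕 u ξ := by
  have : 𝓕 (shiftedDeriv v c u) = 𝓕 (∂_{v} u) - c • 𝓕 u := by
    simp [shiftedDeriv, sub_eq_add_neg, FourierTransform.fourier_add, FourierTransform.fourier_smul]
  rw [this, sub_apply, smul_apply, fourier_lineDerivOp_apply, smul_eq_mul, sub_mul]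

lemma fourier_shiftedDeriv_pow_apply (v : E) (c : ℂ) (k : ℕ) (u : 𝓢(E, ℂ)) (ξ : E) :
    𝓕 ((shiftedDeriv v c ^ k) u) ξ =
      (2 * π * Complex.I * (inner ℝ ξ v : ℝ) - c) ^ k * 𝓕 u ξ := by
  induction k with
  | zero => simp
  | succ k ih =>
    rw [pow_succ', mul_apply_eq_comp, fourier_shiftedDeriv_apply, ih]
    ring

lemma integral_norm_sq_le_of_norm_fourier_sq_le {f g u : 𝓢(E, ℂ)} {α β : ℝ}
    (h : ∀ ξ, ‖𝓕 f ξ‖ ^ 2 ≤ α * ‖𝓕 u ξ‖ ^ 2 + β * ‖𝓕 g ξ‖ ^ 2) :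
    ∫ x, ‖f x‖ ^ 2 ≤ α * (∫ x, ‖u x‖ ^ 2) + β * ∫ x, ‖g x‖ ^ 2 := by
  have int_u := (integrable_norm_sq_schwartzMap (μ := volume) (𝓕 u)).const_mul α
  have int_g := (integrable_norm_sq_schwartzMap (μ := volume) (𝓕 g)).const_mul β
  rw [← integral_norm_sq_fourier f, ← integral_norm_sq_fourier u, ← integral_norm_sq_fourier g,
    ← integral_const_mul, ← integral_const_mul, ← integral_add int_u int_g]
  exact integral_mono (integrable_norm_sq_schwartzMap _) (int_u.add int_g) h

end ShiftedDeriv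

section Symbol

variable {ι : Type*} [Fintype ι] [DecidableEq ι]

/-- The semiclassical symbol `∑ j, (i η_j - δ_{jN})⁴` of `e^{x_N/h} h⁴ (∑ j, ∂_j⁴) e^{-x_N/h}`. -/
def carlemanSymbol (N : ι) (η : ι → ℝ) : ℂ :=
  ∑ j, (η j * Complex.I - if j = N then 1 else 0) ^ 4

lemma carlemanSymbol_eq (N : ι) (η : ι → ℝ) :
    carlemanSymbol N η =
      ((∑ j ∈ Finset.univ.erase N, η j ^ 4) + η N ^ 4 - 6 * η N ^ 2 + 1 : ℝ) +
        (4 * η N * (η N ^ 2 - 1) : ℝ) * Complex.I := by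
  have h_off : ∑ j ∈ Finset.univ.erase N, (η j * Complex.I - if j = N then 1 else 0) ^ 4 =
      ∑ j ∈ Finset.univ.erase N, (η j : ℂ) ^ 4 := Finset.sum_congr rfl fun j hj => by
    rw [if_neg (Finset.ne_of_mem_erase hj), sub_zero, mul_pow, Complex.I_pow_four, mul_one]
  rw [carlemanSymbol, ← Finset.sum_erase_add _ _ (Finset.mem_univ N), h_off, if_pos rfl]
  push_cast
  linear_combination (η N : ℂ) ^ 4 * Complex.I_pow_four - 4 * (η N : ℂ) ^ 3 * Complex.I_pow_three +
    6 * (η N : ℂ) ^ 2 * Complex.I_sq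

lemma norm_carlemanSymbol_sq (N : ι) (η : ι → ℝ) :
    ‖carlemanSymbol N η‖ ^ 2 =
      ((∑ j ∈ Finset.univ.erase N, η j ^ 4) + η N ^ 4 - 6 * η N ^ 2 + 1) ^ 2 +
        (4 * η N * (η N ^ 2 - 1)) ^ 2 := by
  rw [carlemanSymbol_eq, ← Complex.normSq_eq_norm_sq, Complex.normSq_add_mul_I]

/- The imaginary part `4 t (t² - 1)` of the symbol controls `1 - t²` unless `t = η_N` is small, in
which case the real part is bounded below. -/
lemma one_sub_sq_sq_le_four_mul_norm_carlemanSymbol_sq (N : ι) (η : ι → ℝ) :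
    (1 - η N ^ 2) ^ 2 ≤ 4 * ‖carlemanSymbol N η‖ ^ 2 := by
  rw [norm_carlemanSymbol_sq]
  have hS : 0 ≤ ∑ j ∈ Finset.univ.erase N, η j ^ 4 := by positivity
  set S := ∑ j ∈ Finset.univ.erase N, η j ^ 4
  set t := η N
  rcases le_total (1 / 16) (t ^ 2) with h_large | h_small
  · have : (1 - t ^ 2) ^ 2 ≤ 4 * (4 * t * (t ^ 2 - 1)) ^ 2 := by
      nlinarith [mul_nonneg (sub_nonneg.2 h_large) (sq_nonneg (t ^ 2 - 1)), sq_nonneg (t ^ 2 - 1)]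
    linarith [sq_nonneg (S + t ^ 4 - 6 * t ^ 2 + 1)]
  · have h_re : 1 / 2 ≤ S + t ^ 4 - 6 * t ^ 2 + 1 := by nlinarith [sq_nonneg (t ^ 2)]
    have : (1 - t ^ 2) ^ 2 ≤ 1 := by nlinarith [sq_nonneg t]
    nlinarith [sq_nonneg (4 * t * (t ^ 2 - 1))]

lemma norm_mul_I_sub_ite_sq_le (N j : ι) (η : ι → ℝ) :
    ‖(η j * Complex.I - if j = N then 1 else 0 : ℂ)‖ ^ 2 ≤ 19 + ‖carlemanSymbol N η‖ ^ 2 := by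
  have h_norm : ‖(η j * Complex.I - if j = N then 1 else 0 : ℂ)‖ ^ 2 ≤ η j ^ 2 + 1 := by
    rw [← Complex.normSq_eq_norm_sq, Complex.normSq_apply]
    split_ifs <;> simp [pow_two, add_comm]
  have h_quartic : η j ^ 4 ≤ (∑ k ∈ Finset.univ.erase N, η k ^ 4) + η N ^ 4 := by
    rw [Finset.sum_erase_add _ _ (Finset.mem_univ N)]
    exact Finset.single_le_sum (f := fun k => η k ^ 4) (fun k _ => by positivity)
      (Finset.mem_univ j)
  refine h_norm.trans ?_
  rw [norm_carlemanSymbol_sq]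
  have hS : 0 ≤ ∑ k ∈ Finset.univ.erase N, η k ^ 4 := by positivity
  set S := ∑ k ∈ Finset.univ.erase N, η k ^ 4
  have h_re : η j ^ 4 ≤ 2 * ((S + η N ^ 4 - 6 * η N ^ 2 + 1) + 17) := by
    linarith [sq_nonneg (η N ^ 2 - 6)]
  linarith [sq_nonneg (η j ^ 2 - 1), sq_nonneg (4 * η N * (η N ^ 2 - 1)),
    sq_nonneg (S + η N ^ 4 - 6 * η N ^ 2 + 1 - 1 / 2)]

end Symbol

section ConjugatedOperator

variable {ι : Type*} [Fintype ι] [DecidableEq ι]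

/-- The conjugated semiclassical derivative `e^{x_N/h} (h ∂_j) e^{-x_N/h} = h ∂_j - δ_{jN}`. -/
def conjDeriv (h : ℝ) (N j : ι) :
    𝓢(EuclideanSpace ℝ ι, ℂ) →L[ℂ] 𝓢(EuclideanSpace ℝ ι, ℂ) :=
  shiftedDeriv (EuclideanSpace.single j h) (if j = N then 1 else 0)

/-- The conjugated principal part `e^{x_N/h} h⁴ (∑ j, ∂_j⁴) e^{-x_N/h}`. -/
def conjPrincipal (h : ℝ) (N : ι) :
    𝓢(EuclideanSpace ℝ ι, ℂ) →L[ℂ] 𝓢(EuclideanSpace ℝ ι, ℂ) :=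
  ∑ j, conjDeriv h N j ^ 4

/-- The conjugated lower order terms `e^{x_N/h} h (A · D + q) e^{-x_N/h}`. -/
def conjLowerOrder (h : ℝ) (N : ι) (A : EuclideanSpace ℝ ι → ι → ℂ) (q : EuclideanSpace ℝ ι → ℂ)
    (u : 𝓢(EuclideanSpace ℝ ι, ℂ)) (x : EuclideanSpace ℝ ι) : ℂ :=
  -Complex.I * ∑ j, A x j * conjDeriv h N j u x + h * q x * u x

lemma inv_smul_conjDeriv_apply {h : ℝ} (hh : h ≠ 0) (N j : ι) (u : 𝓢(EuclideanSpace ℝ ι, ℂ))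
    (x : EuclideanSpace ℝ ι) :
    ((h : ℂ)⁻¹ • conjDeriv h N j) u x =
      shiftedDeriv (EuclideanSpace.single j 1) (if j = N then (h : ℂ)⁻¹ else 0) u x := by
  have h_single : EuclideanSpace.single j h = h • EuclideanSpace.single j (1 : ℝ) := by ext; simp
  have hh' : (h : ℂ) ≠ 0 := Complex.ofReal_ne_zero.2 hh
  rw [smul_apply, smul_apply, conjDeriv, shiftedDeriv_apply_apply, shiftedDeriv_apply_apply,
    h_single, map_smul, Complex.real_smul, smul_eq_mul]
  split_ifs <;> simp [mul_sub, hh']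

lemma conjPrincipal_apply_apply (h : ℝ) (N : ι) (u : 𝓢(EuclideanSpace ℝ ι, ℂ))
    (x : EuclideanSpace ℝ ι) :
    conjPrincipal h N u x = ∑ j, (conjDeriv h N j ^ 4) u x := by
  simp [conjPrincipal, sum_apply]

lemma conjPrincipal_apply_eq_zero_of_notMem_tsupport (h : ℝ) (N : ι)
    {u : 𝓢(EuclideanSpace ℝ ι, ℂ)} {x : EuclideanSpace ℝ ι} (hx : x ∉ tsupport u) :
    conjPrincipal h N u x = 0 := by
  rw [conjPrincipal_apply_apply]
  exact Finset.sum_eq_zero fun j _ => image_eq_zero_of_notMem_tsupport fun hx' =>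
    hx (tsupport_shiftedDeriv_pow_subset _ _ 4 u hx')

lemma fourier_conjDeriv_pow_apply (h : ℝ) (N j : ι) (k : ℕ) (u : 𝓢(EuclideanSpace ℝ ι, ℂ))
    (ξ : EuclideanSpace ℝ ι) :
    𝓕 ((conjDeriv h N j ^ k) u) ξ =
      ((2 * π * h * ξ j : ℝ) * Complex.I - if j = N then 1 else 0) ^ k * 𝓕 u ξ := by
  rw [conjDeriv, fourier_shiftedDeriv_pow_apply, EuclideanSpace.inner_single_right]
  congr 3
  simp
  ring

lemma fourier_conjPrincipal_apply (h : ℝ) (N : ι) (u : 𝓢(EuclideanSpace ℝ ι, ℂ))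
    (ξ : EuclideanSpace ℝ ι) :
    𝓕 (conjPrincipal h N u) ξ = carlemanSymbol N (fun j => 2 * π * h * ξ j) * 𝓕 u ξ := by
  have : 𝓕 (conjPrincipal h N u) = ∑ j, 𝓕 ((conjDeriv h N j ^ 4) u) := by
    simp only [conjPrincipal, sum_apply]
    exact map_sum (fourierTransformCLM ℂ) _ _
  simp only [this, sum_apply, fourier_conjDeriv_pow_apply, carlemanSymbol, Finset.sum_mul]

lemma integral_norm_sq_conjDeriv_le (h : ℝ) (N j : ι) (u : 𝓢(EuclideanSpace ℝ ι, ℂ)) :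
    ∫ x, ‖conjDeriv h N j u x‖ ^ 2 ≤
      19 * (∫ x, ‖u x‖ ^ 2) + ∫ x, ‖conjPrincipal h N u x‖ ^ 2 := by
  rw [← one_mul (∫ x, ‖conjPrincipal h N u x‖ ^ 2)]
  refine integral_norm_sq_le_of_norm_fourier_sq_le fun ξ => ?_
  have h_fourier := fourier_conjDeriv_pow_apply h N j 1 u ξ
  rw [pow_one, pow_one] at h_fourier
  rw [h_fourier, fourier_conjPrincipal_apply, norm_mul, norm_mul, mul_pow, mul_pow, one_mul,
    ← add_mul]
  gcongr
  exact norm_mul_I_sub_ite_sq_le N j (fun j => 2 * π * h * ξ j)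

lemma integral_norm_sq_lineDeriv_lineDeriv_add_le (h : ℝ) (N : ι)
    (u : 𝓢(EuclideanSpace ℝ ι, ℂ)) :
    ∫ x, ‖(∂_{EuclideanSpace.single N h} (∂_{EuclideanSpace.single N h} u) + u) x‖ ^ 2 ≤
      4 * ∫ x, ‖conjPrincipal h N u x‖ ^ 2 := by
  rw [← zero_add (4 * _), ← zero_mul (∫ x, ‖u x‖ ^ 2)]
  refine integral_norm_sq_le_of_norm_fourier_sq_le fun ξ => ?_
  set η : ι → ℝ := fun j => 2 * π * h * ξ j
  have h_symbol : 𝓕 (∂_{EuclideanSpace.single N h} (∂_{EuclideanSpace.single N h} u) + u) ξ =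
      (1 - η N ^ 2 : ℝ) * 𝓕 u ξ := by
    rw [FourierTransform.fourier_add, add_apply, fourier_lineDerivOp_apply,
      fourier_lineDerivOp_apply, EuclideanSpace.inner_single_right]
    simp only [η]
    push_cast
    simp
    linear_combination (2 * π * h * ξ N) ^ 2 * 𝓕 u ξ * Complex.I_sq
  calc ‖𝓕 (∂_{EuclideanSpace.single N h} (∂_{EuclideanSpace.single N h} u) + u) ξ‖ ^ 2
      = (1 - η N ^ 2) ^ 2 * ‖𝓕 u ξ‖ ^ 2 := by
        rw [h_symbol, norm_mul, mul_pow _ ‖𝓕 u ξ‖, Complex.norm_real, norm_eq_abs, sq_abs]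
    _ ≤ 4 * ‖carlemanSymbol N η‖ ^ 2 * ‖𝓕 u ξ‖ ^ 2 := by
        gcongr
        exact one_sub_sq_sq_le_four_mul_norm_carlemanSymbol_sq N η
    _ = 0 * ‖𝓕 u ξ‖ ^ 2 + 4 * ‖𝓕 (conjPrincipal h N u) ξ‖ ^ 2 := by
        rw [fourier_conjPrincipal_apply, norm_mul]
        ring

theorem sq_mul_integral_norm_sq_le_integral_norm_conjPrincipal_sq {h : ℝ} (hh : 0 < h) {N : ι}
    {a b : ℝ} {u : 𝓢(EuclideanSpace ℝ ι, ℂ)} (hu : ∀ x ∈ tsupport u, x N ∈ Icc a b) :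
    h ^ 2 * ∫ x, ‖u x‖ ^ 2 ≤ 4 * (b - a) ^ 2 * ∫ x, ‖conjPrincipal h N u x‖ ^ 2 := by
  have h_scaled : ∀ x ∈ tsupport u, (h⁻¹ • EuclideanSpace.proj N : _ →L[ℝ] ℝ) x ∈
      Icc (h⁻¹ * a) (h⁻¹ * b) := fun x hx =>
    ⟨mul_le_mul_of_nonneg_left (hu x hx).1 (inv_nonneg.2 hh.le),
      mul_le_mul_of_nonneg_left (hu x hx).2 (inv_nonneg.2 hh.le)⟩
  have h_poincare := integral_norm_sq_le_integral_norm_lineDeriv_lineDeriv_add_sq (μ := volume)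
    (v := EuclideanSpace.single N h) (by simp [hh.ne']) h_scaled
  calc h ^ 2 * ∫ x, ‖u x‖ ^ 2
      ≤ h ^ 2 * ((h⁻¹ * b - h⁻¹ * a) ^ 2 * (4 * ∫ x, ‖conjPrincipal h N u x‖ ^ 2)) := by
        gcongr
        refine h_poincare.trans ?_
        gcongr
        exact integral_norm_sq_lineDeriv_lineDeriv_add_le h N u
    _ = 4 * (b - a) ^ 2 * ∫ x, ‖conjPrincipal h N u x‖ ^ 2 := by
        field_simp

end ConjugatedOperator

section Conjugation

variable {n : ℕ} {h : ℝ}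

lemma pd_exp_mul (hh : h ≠ 0) (N j : Fin n) (u : 𝓢(EuclideanSpace ℝ (Fin n), ℂ)) :
    pd j (fun y => (exp (-(y N) / h) : ℂ) * u y) =
      fun y => (exp (-(y N) / h) : ℂ) * ((h : ℂ)⁻¹ • conjDeriv h N j) u y := by
  let φ : EuclideanSpace ℝ (Fin n) →L[ℝ] ℝ := h⁻¹ • EuclideanSpace.proj N
  have h_weight (y : EuclideanSpace ℝ (Fin n)) : -(y N) / h = -φ y := by
    simp [φ, div_eq_inv_mul]
  have h_single : (φ (EuclideanSpace.single j 1) : ℂ) = if j = N then (h : ℂ)⁻¹ else 0 := by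
    rcases eq_or_ne j N with rfl | hj
    · simp [φ]
    · simp [φ, hj, hj.symm]
  funext y
  simp only [pd, h_weight, fderiv_exp_neg_mul_apply, h_single, inv_smul_conjDeriv_apply hh]

lemma iterate_pd_exp_mul (hh : h ≠ 0) (N j : Fin n) (k : ℕ)
    (u : 𝓢(EuclideanSpace ℝ (Fin n), ℂ)) :
    (pd j)^[k] (fun y => (exp (-(y N) / h) : ℂ) * u y) =
      fun y => (exp (-(y N) / h) : ℂ) * (((h : ℂ)⁻¹ • conjDeriv h N j) ^ k) u y := by
  induction k with
  | zero => simp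
  | succ k ih => rw [Function.iterate_succ_apply', ih, pd_exp_mul hh, pow_succ', mul_apply_eq_comp]

theorem exp_mul_opL_exp_mul (hh : h ≠ 0) (N : Fin n) (A : EuclideanSpace ℝ (Fin n) → Fin n → ℂ)
    (q : EuclideanSpace ℝ (Fin n) → ℂ) (u : 𝓢(EuclideanSpace ℝ (Fin n), ℂ))
    (x : EuclideanSpace ℝ (Fin n)) :
    (exp (x N / h) : ℂ) * (h : ℂ) ^ 4 * opL A q (fun y => (exp (-(y N) / h) : ℂ) * u y) x =
      conjPrincipal h N u x + (h : ℂ) ^ 3 * conjLowerOrder h N A q u x := by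
  have h_exp : (exp (x N / h) : ℂ) * exp (-(x N) / h) = 1 := by
    rw [← Complex.ofReal_mul, ← exp_add, neg_div, add_neg_cancel, exp_zero, Complex.ofReal_one]
  have hh' : (h : ℂ) ≠ 0 := Complex.ofReal_ne_zero.2 hh
  have h_pow (j : Fin n) : (h : ℂ) ^ 4 * (((h : ℂ)⁻¹ • conjDeriv h N j) ^ 4) u x =
      (conjDeriv h N j ^ 4) u x := by
    rw [smul_pow, smul_apply, smul_apply, smul_eq_mul, inv_pow,
      mul_inv_cancel_left₀ (pow_ne_zero 4 hh')]
  have h_smul (j : Fin n) : (h : ℂ) * ((h : ℂ)⁻¹ • conjDeriv h N j) u x =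
      conjDeriv h N j u x := by
    rw [smul_apply, smul_apply, smul_eq_mul, mul_inv_cancel_left₀ hh']
  simp only [opL, iterate_pd_exp_mul hh, pd_exp_mul hh, conjPrincipal_apply_apply, conjLowerOrder,
    ← h_pow, ← h_smul]
  simp only [mul_left_comm _ (exp (-(x N) / h) : ℂ), mul_left_comm _ (h : ℂ), ← Finset.mul_sum]
  linear_combination (h : ℂ) ^ 4 * (∑ j, (((h : ℂ)⁻¹ • conjDeriv h N j) ^ 4) u x -
    Complex.I * (∑ j, A x j * ((h : ℂ)⁻¹ • conjDeriv h N j) u x) + q x * u x) * h_exp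

end Conjugation

section LowerOrder

variable {ι : Type*} [Fintype ι] [DecidableEq ι] {Ω : Set (EuclideanSpace ℝ ι)}
  {h K a b : ℝ} {N : ι} {A : EuclideanSpace ℝ ι → ι → ℂ} {q : EuclideanSpace ℝ ι → ℂ}
  {u : 𝓢(EuclideanSpace ℝ ι, ℂ)}

lemma memLp_conjLowerOrder (hA : MemLp A ∞ (volume.restrict Ω))
    (hq : MemLp q ∞ (volume.restrict Ω)) :
    MemLp (conjLowerOrder h N A q u) 2 (volume.restrict Ω) := by
  have h_first : MemLp (fun x => ∑ j, A x j * conjDeriv h N j u x) 2 (volume.restrict Ω) :=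
    memLp_finsetSum _ fun j _ =>
      (((conjDeriv h N j u).memLp 2 volume).restrict Ω).mul (memLp_pi_iff.1 hA j)
  exact (h_first.const_mul _).add (((u.memLp 2 volume).restrict Ω).mul (hq.const_mul _))

lemma norm_conjLowerOrder_sq_le (hh : |h| ≤ 1) {x : EuclideanSpace ℝ ι} (hA : ‖A x‖ ≤ K)
    (hq : ‖q x‖ ≤ K) :
    ‖conjLowerOrder h N A q u x‖ ^ 2 ≤
      (Fintype.card ι + 1) * K ^ 2 * (∑ j, ‖conjDeriv h N j u x‖ ^ 2 + ‖u x‖ ^ 2) := by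
  have : 0 ≤ K := (norm_nonneg _).trans hA
  have h_norm : ‖conjLowerOrder h N A q u x‖ ≤
      K * (∑ j, ‖conjDeriv h N j u x‖ + ‖u x‖) := by
    calc ‖conjLowerOrder h N A q u x‖
        ≤ ∑ j, ‖A x j‖ * ‖conjDeriv h N j u x‖ + |h| * ‖q x‖ * ‖u x‖ := by
          refine (norm_add_le _ _).trans ?_
          simp only [norm_mul, norm_neg, Complex.norm_I, one_mul, Complex.norm_real, norm_eq_abs]
          gcongr
          exact (norm_sum_le _ _).trans_eq (by simp only [norm_mul])
      _ ≤ ∑ j, K * ‖conjDeriv h N j u x‖ + 1 * K * ‖u x‖ := by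
          gcongr with j
          exact (norm_le_pi_norm (A x) j).trans hA
      _ = K * (∑ j, ‖conjDeriv h N j u x‖ + ‖u x‖) := by
          rw [← Finset.mul_sum, one_mul, mul_add]
  have h_cauchy : (∑ j, ‖conjDeriv h N j u x‖ + ‖u x‖) ^ 2 ≤
      (Fintype.card ι + 1) * (∑ j, ‖conjDeriv h N j u x‖ ^ 2 + ‖u x‖ ^ 2) := by
    simpa [add_comm] using sq_sum_le_card_mul_sum_sq (s := Finset.univ)
      (f := fun j : Option ι => j.elim ‖u x‖ fun j => ‖conjDeriv h N j u x‖)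
  calc ‖conjLowerOrder h N A q u x‖ ^ 2
      ≤ (K * (∑ j, ‖conjDeriv h N j u x‖ + ‖u x‖)) ^ 2 := by gcongr
    _ ≤ _ := by
      rw [mul_pow, mul_comm (_ + 1 : ℝ) (K ^ 2), mul_assoc]
      gcongr

lemma integral_norm_conjLowerOrder_sq_le (hh : |h| ≤ 1)
    (hA : ∀ᵐ x ∂volume.restrict Ω, ‖A x‖ ≤ K) (hq : ∀ᵐ x ∂volume.restrict Ω, ‖q x‖ ≤ K) :
    ∫ x in Ω, ‖conjLowerOrder h N A q u x‖ ^ 2 ≤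
      20 * (Fintype.card ι + 1) ^ 2 * K ^ 2 *
        ((∫ x, ‖u x‖ ^ 2) + ∫ x, ‖conjPrincipal h N u x‖ ^ 2) := by
  have int_deriv (j : ι) : Integrable (fun x => ‖conjDeriv h N j u x‖ ^ 2) :=
    integrable_norm_sq_schwartzMap _
  have int_sum : Integrable (fun x => ∑ j, ‖conjDeriv h N j u x‖ ^ 2) :=
    integrable_finsetSum _ fun j _ => int_deriv j
  have int_u : Integrable (fun x => ‖u x‖ ^ 2) := integrable_norm_sq_schwartzMap _
  have int_bound := (int_sum.add int_u).const_mul ((Fintype.card ι + 1) * K ^ 2)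
  set v := ∫ x, ‖u x‖ ^ 2
  set p := ∫ x, ‖conjPrincipal h N u x‖ ^ 2
  have hv : 0 ≤ v := integral_nonneg fun _ => sq_nonneg _
  have hp : 0 ≤ p := integral_nonneg fun _ => sq_nonneg _
  calc ∫ x in Ω, ‖conjLowerOrder h N A q u x‖ ^ 2
      ≤ ∫ x in Ω, (Fintype.card ι + 1) * K ^ 2 * (∑ j, ‖conjDeriv h N j u x‖ ^ 2 + ‖u x‖ ^ 2) := by
        refine integral_mono_of_nonneg (.of_forall fun _ => sq_nonneg _) int_bound.integrableOn ?_
        filter_upwards [hA, hq] with x hAx hqx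
        exact norm_conjLowerOrder_sq_le hh hAx hqx
    _ ≤ ∫ x, (Fintype.card ι + 1) * K ^ 2 * (∑ j, ‖conjDeriv h N j u x‖ ^ 2 + ‖u x‖ ^ 2) :=
        setIntegral_le_integral int_bound (.of_forall fun x => by positivity)
    _ = (Fintype.card ι + 1) * K ^ 2 * (∑ j, (∫ x, ‖conjDeriv h N j u x‖ ^ 2) + v) := by
        rw [integral_const_mul, integral_add int_sum int_u,
          integral_finsetSum _ fun j _ => int_deriv j]
    _ ≤ (Fintype.card ι + 1) * K ^ 2 * (∑ _j : ι, (19 * v + p) + v) := by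
        gcongr with j
        exact integral_norm_sq_conjDeriv_le h N j u
    _ ≤ (Fintype.card ι + 1) * K ^ 2 * (20 * (Fintype.card ι + 1) * (v + p)) := by
        gcongr
        simp only [Finset.sum_const, Finset.card_univ, nsmul_eq_mul]
        nlinarith [mul_nonneg (Fintype.card ι).cast_nonneg hv,
          mul_nonneg (Fintype.card ι).cast_nonneg hp]
    _ = 20 * (Fintype.card ι + 1) ^ 2 * K ^ 2 * (v + p) := by ring

lemma setIntegral_norm_conjPrincipal_sq (hu : tsupport u ⊆ Ω) :
    ∫ x in Ω, ‖conjPrincipal h N u x‖ ^ 2 = ∫ x, ‖conjPrincipal h N u x‖ ^ 2 :=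
  setIntegral_eq_integral_of_forall_compl_eq_zero fun x hx => by
    rw [conjPrincipal_apply_eq_zero_of_notMem_tsupport h N (fun hx' => hx (hu hx')), norm_zero,
      zero_pow two_ne_zero]

/- The lower order terms enter with a factor `h³`, whereas the principal part loses only one power
of `h`. -/
theorem integral_norm_conjPrincipal_sq_le (hh : 0 < h) (hh_one : h ≤ 1)
    (hΩ : ∀ x ∈ Ω, x N ∈ Icc a b) (hA : MemLp A ∞ (volume.restrict Ω))
    (hq : MemLp q ∞ (volume.restrict Ω)) (hAK : ∀ᵐ x ∂volume.restrict Ω, ‖A x‖ ≤ K)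
    (hqK : ∀ᵐ x ∂volume.restrict Ω, ‖q x‖ ≤ K)
    (h_small : 80 * (Fintype.card ι + 1) ^ 2 * K ^ 2 * (4 * (b - a) ^ 2 + 1) * h ≤ 1)
    (hu : tsupport u ⊆ Ω) :
    ∫ x, ‖conjPrincipal h N u x‖ ^ 2 ≤
      4 * ∫ x in Ω, ‖conjPrincipal h N u x + (h : ℂ) ^ 3 * conjLowerOrder h N A q u x‖ ^ 2 := by
  have h_split := integral_norm_sq_le_two_mul_integral_norm_add_sq
    (((conjPrincipal h N u).memLp 2 volume).restrict Ω)
    ((memLp_conjLowerOrder (h := h) (N := N) (u := u) hA hq).const_mul ((h : ℂ) ^ 3))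
  have h_lower := integral_norm_conjLowerOrder_sq_le (N := N) (u := u)
    (by rwa [abs_of_pos hh]) hAK hqK
  have h_principal := sq_mul_integral_norm_sq_le_integral_norm_conjPrincipal_sq hh
    fun x hx => hΩ x (hu hx)
  rw [setIntegral_norm_conjPrincipal_sq hu] at h_split
  set p := ∫ x, ‖conjPrincipal h N u x‖ ^ 2
  set v := ∫ x, ‖u x‖ ^ 2
  set M : ℝ := 20 * (Fintype.card ι + 1) ^ 2 * K ^ 2
  have hp : 0 ≤ p := integral_nonneg fun _ => sq_nonneg _
  have : 0 ≤ M := by positivity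
  have h_absorb : ∫ x in Ω, ‖(h : ℂ) ^ 3 * conjLowerOrder h N A q u x‖ ^ 2 ≤ p / 4 := by
    calc ∫ x in Ω, ‖(h : ℂ) ^ 3 * conjLowerOrder h N A q u x‖ ^ 2
        = h ^ 6 * ∫ x in Ω, ‖conjLowerOrder h N A q u x‖ ^ 2 := by
          rw [← integral_const_mul]
          congr with x
          rw [norm_mul, norm_pow, Complex.norm_of_nonneg hh.le]
          ring
      _ ≤ h ^ 6 * (M * (v + p)) := by gcongr
      _ = M * h ^ 4 * (h ^ 2 * v + h ^ 2 * p) := by ring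
      _ ≤ M * h * (4 * (b - a) ^ 2 * p + 1 * p) := by
          gcongr
          · exact pow_le_of_le_one hh.le hh_one four_ne_zero
          · exact pow_le_one₀ hh.le hh_one
      _ = 4 * M * (4 * (b - a) ^ 2 + 1) * h * p / 4 := by ring
      _ ≤ p / 4 := by
          have : 4 * M * (4 * (b - a) ^ 2 + 1) * h ≤ 1 := by linarith
          gcongr
          exact mul_le_of_le_one_left hp this
  linarith

end LowerOrder

section Carleman

variable {n : ℕ} {N : Fin n} {a b : ℝ} {Ω : Set (EuclideanSpace ℝ (Fin n))}
  {A : EuclideanSpace ℝ (Fin n) → Fin n → ℂ} {q : EuclideanSpace ℝ (Fin n) → ℂ}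

lemma BddLipOn.memLp_top (hA : BddLipOn Ω A) (hΩ : MeasurableSet Ω) :
    MemLp A ∞ (volume.restrict Ω) := by
  obtain ⟨⟨M, hM⟩, K, hK⟩ := hA
  exact memLp_top_of_bound (hK.continuousOn.aestronglyMeasurable hΩ) M
    (ae_restrict_of_forall_mem hΩ hM)

lemma BddMeasOn.memLp_top (hq : BddMeasOn Ω q) (hΩ : MeasurableSet Ω) :
    MemLp q ∞ (volume.restrict Ω) := by
  obtain ⟨hq_meas, M, hM⟩ := hq
  exact memLp_top_of_bound hq_meas.aestronglyMeasurable M (ae_restrict_of_forall_mem hΩ hM)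

lemma l2norm_sq (f : EuclideanSpace ℝ (Fin n) → ℂ) : l2norm Ω f ^ 2 = ∫ x in Ω, ‖f x‖ ^ 2 :=
  sq_sqrt (integral_nonneg fun _ => sq_nonneg _)

theorem carleman_linear_weight_general (hab : a ≤ b) (hΩ : ∀ x ∈ Ω, x N ∈ Icc a b)
    (hA : MemLp A ∞ (volume.restrict Ω)) (hq : MemLp q ∞ (volume.restrict Ω)) :
    ∃ h₀ : ℝ, 0 < h₀ ∧ h₀ < 1 ∧ ∀ h : ℝ, 0 < h → h < h₀ →
      ∀ w : EuclideanSpace ℝ (Fin n) → ℂ, IsCcInfty Ω w →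
        h * l2norm Ω w ≤ 4 * (b - a) * l2norm Ω (fun x =>
          (exp (x N / h) : ℂ) * (h : ℂ) ^ 4 *
            opL A q (fun y => (exp (-(y N) / h) : ℂ) * w y) x) := by
  set K := max (lpNorm A ∞ (volume.restrict Ω)) (lpNorm q ∞ (volume.restrict Ω))
  set Λ : ℝ := 80 * (n + 1) ^ 2 * K ^ 2 * (4 * (b - a) ^ 2 + 1)
  have hΛ : 0 ≤ Λ := by positivity
  refine ⟨1 / (Λ + 2), by positivity, (div_lt_one (by positivity)).2 (by linarith),
    fun h hh hlt w ⟨hw_smooth, hw_compact, hwΩ⟩ => ?_⟩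
  obtain ⟨u, rfl⟩ : ∃ u : 𝓢(EuclideanSpace ℝ (Fin n), ℂ), ⇑u = w :=
    ⟨hw_compact.toSchwartzMap hw_smooth, rfl⟩
  rw [lt_div_iff₀ (by positivity)] at hlt
  have h_principal := integral_norm_conjPrincipal_sq_le (N := N) (K := K) hh (by nlinarith) hΩ hA hq
    ((ae_le_lpNorm_exponent_top hA).mono fun _ hx => hx.trans (le_max_left _ _))
    ((ae_le_lpNorm_exponent_top hq).mono fun _ hx => hx.trans (le_max_right _ _))
    (by rw [Fintype.card_fin]; nlinarith) hwΩ
  simp only [← exp_mul_opL_exp_mul hh.ne', ← l2norm_sq] at h_principal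
  refine (sq_le_sq₀ (mul_nonneg hh.le (sqrt_nonneg _))
    (mul_nonneg (by linarith) (sqrt_nonneg _))).1 ?_
  calc (h * l2norm Ω u) ^ 2 ≤ h ^ 2 * ∫ x, ‖u x‖ ^ 2 := by
        rw [mul_pow, l2norm_sq]
        exact mul_le_mul_of_nonneg_left (setIntegral_le_integral (integrable_norm_sq_schwartzMap u)
          (.of_forall fun _ => sq_nonneg _)) (sq_nonneg h)
    _ ≤ 4 * (b - a) ^ 2 * ∫ x, ‖conjPrincipal h N u x‖ ^ 2 :=
        sq_mul_integral_norm_sq_le_integral_norm_conjPrincipal_sq hh fun x hx => hΩ x (hwΩ hx)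
    _ ≤ 4 * (b - a) ^ 2 * (4 * l2norm Ω _ ^ 2) := by gcongr
    _ = (4 * (b - a) * l2norm Ω _) ^ 2 := by ring

end Carleman

/-- Lemma 2.1: Carleman inequality with linear weight. -/
theorem carleman_linear_weight
    (n : ℕ) (hn : 2 ≤ n) (a b : ℝ) (hab : a < b)
    (Ω : Set (EuclideanSpace ℝ (Fin n)))
    (hΩ : Ω = {x : EuclideanSpace ℝ (Fin n) | a < x ⟨n - 1, by omega⟩ ∧ x ⟨n - 1, by omega⟩ < b})
    (A : EuclideanSpace ℝ (Fin n) → Fin n → ℂ) (q : EuclideanSpace ℝ (Fin n) → ℂ)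
    (hA : BddLipOn Ω A) (hq : BddMeasOn Ω q) :
    ∃ C > (0 : ℝ), ∃ h₀ : ℝ, 0 < h₀ ∧ h₀ < 1 ∧
      ∀ h : ℝ, 0 < h → h < h₀ →
        ∀ w : EuclideanSpace ℝ (Fin n) → ℂ, IsCcInfty Ω w →
          h * l2norm Ω w ≤
            C * l2norm Ω (fun x =>
              (Real.exp (x ⟨n - 1, by omega⟩ / h) : ℂ) * (h : ℂ) ^ 4 *
                opL A q (fun y => (Real.exp (-(y ⟨n - 1, by omega⟩) / h) : ℂ) * w y) x) := by
  subst hΩ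
  have hΩ_meas : MeasurableSet {x : EuclideanSpace ℝ (Fin n) |
      a < x ⟨n - 1, by omega⟩ ∧ x ⟨n - 1, by omega⟩ < b} := by measurability
  exact ⟨4 * (b - a), by linarith, carleman_linear_weight_general hab.le
    (fun x hx => ⟨hx.1.le, hx.2.le⟩) (hA.memLp_top hΩ_meas) (hq.memLp_top hΩ_meas)⟩
end
end

section
/- UCP across a hyperplane (Proposition 2.2). Let n ≥ 2 and Ω = {x = (x',x_n) ∈ ℝⁿ : a < x_n < b} for some real numbers a < b. Let A : Ω → ℂⁿ be bounded and Lipschitz and q : Ω → ℂ be bounded measurable. Suppose u : Ω → ℂ is C⁴ on Ω, u together with all its partial derivatives up to order 4 is square-integrable on Ω, and L_{A,q}u = 0 almost everywhere in Ω. If u vanishes identically on the layer {x ∈ Ω : b − ε < x_n < b} for some ε > 0, then u ≡ 0 in Ω. -/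
open MeasureTheory Real Set

noncomputable section

/-!
Carleman estimate with the weight `exp (γ (xₘ - a)² / 2)`, where `a < xₘ < b` is the layer. In the
weighted `L²` space the derivative `D = ∂ₘ` has the formal adjoint `S = -∂ₘ - γ (xₘ - a)`, and
`S D - D S = γ`: up to scaling, `D` and `S` are the creation and annihilation operators of the
harmonic oscillator. The other derivatives are skew-adjoint and commute with `D` and `S`, so for
`P = ∑ⱼ ∂ⱼ⁴` the difference `‖P f‖² - ‖P* f‖² = ⟪(S⁴ D⁴ - D⁴ S⁴) f, f⟫` is a polynomial in `D S`
with nonnegative coefficients. This bounds `γ⁴ ‖f‖²` and `γ³ ‖∂ⱼ f‖²` by `‖P f‖²`, in which the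
first-order part of the equation can be absorbed.

Cut `u` off near the hyperplane `xₘ = a`, which is where the weight is smallest. The commutator
terms live in `xₘ - a ≤ δ`, where the weight is at most `exp (γ δ² / 2)`; letting `γ → ∞` shows that
`u` vanishes for `xₘ - a > δ`, and `δ > 0` is arbitrary.
-/

section LadderAlgebra

variable {R A : Type*} [CommRing R] [Ring A] [Algebra R A] {D S : A} {c : R}

lemma lowering_pow_mul_number (h : S * D = D * S + c • 1) (k : ℕ) :
    S ^ k * (D * S) = (D * S + (k * c) • 1) * S ^ k := by
  induction k with
  | zero => simp
  | succ k ih =>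
    calc S ^ (k + 1) * (D * S) = S * (S ^ k * (D * S)) := by rw [pow_succ', mul_assoc]
      _ = (S * D + (k * c) • 1) * (S * S ^ k) := by rw [ih]; noncomm_ring
      _ = (D * S + ((k + 1 : ℕ) * c) • 1) * S ^ (k + 1) := by
        rw [h, pow_succ']; push_cast; congr 1; module

lemma raising_pow_mul_number (h : S * D = D * S + c • 1) (k : ℕ) :
    D ^ k * (D * S) = (D * S - (k * c) • 1) * D ^ k := by
  induction k with
  | zero => simp
  | succ k ih =>
    have raising_mul_number : D * (D * S) = (D * S - c • 1) * D := by
      rw [sub_mul, mul_assoc D S D, h]; noncomm_ring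
    calc D ^ (k + 1) * (D * S) = D * (D ^ k * (D * S)) := by rw [pow_succ', mul_assoc]
      _ = (D * (D * S) - (k * c) • D) * D ^ k := by rw [ih]; noncomm_ring
      _ = (D * S - c • 1 - (k * c) • 1) * (D * D ^ k) := by
        rw [raising_mul_number]; noncomm_ring
      _ = (D * S - ((k + 1 : ℕ) * c) • 1) * D ^ (k + 1) := by
        rw [pow_succ']; push_cast; congr 1; module

lemma lowering_pow_succ_mul_raising_pow_succ (h : S * D = D * S + c • 1) (k : ℕ) :
    S ^ (k + 1) * D ^ (k + 1) = (D * S + ((k + 1) * c) • 1) * (S ^ k * D ^ k) := by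
  calc S ^ (k + 1) * D ^ (k + 1) = S ^ k * (S * D) * D ^ k := by
        rw [pow_succ S, pow_succ' D]; noncomm_ring
    _ = (S ^ k * (D * S) + c • S ^ k) * D ^ k := by rw [h]; noncomm_ring
    _ = (D * S + ((k + 1) * c) • 1) * (S ^ k * D ^ k) := by
      rw [lowering_pow_mul_number h, ← mul_assoc]
      congr 1
      simp only [add_mul, smul_mul_assoc, one_mul]
      module

lemma raising_pow_succ_mul_lowering_pow_succ (h : S * D = D * S + c • 1) (k : ℕ) :
    D ^ (k + 1) * S ^ (k + 1) = (D * S - (k * c) • 1) * (D ^ k * S ^ k) := by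
  calc D ^ (k + 1) * S ^ (k + 1) = D ^ k * (D * S) * S ^ k := by
        rw [pow_succ D, pow_succ' S]; noncomm_ring
    _ = (D * S - (k * c) • 1) * (D ^ k * S ^ k) := by
      rw [raising_pow_mul_number h, mul_assoc]

lemma lowering_sq_mul_raising_sq (h : S * D = D * S + c • 1) :
    S ^ 2 * D ^ 2 = (D * S) ^ 2 + (3 * c) • (D * S) + (2 * c ^ 2) • 1 := by
  rw [lowering_pow_succ_mul_raising_pow_succ h 1, lowering_pow_succ_mul_raising_pow_succ h 0]
  simp only [pow_zero, mul_one, add_mul, mul_add, smul_mul_assoc, mul_smul_comm, one_mul, smul_add,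
    smul_smul, pow_two]
  push_cast
  module

lemma raising_sq_mul_lowering_sq (h : S * D = D * S + c • 1) :
    D ^ 2 * S ^ 2 = (D * S) ^ 2 - c • (D * S) := by
  rw [raising_pow_succ_mul_lowering_pow_succ h 1, raising_pow_succ_mul_lowering_pow_succ h 0]
  simp [sub_mul, pow_two]

lemma lowering_pow_four_mul_raising_pow_four (h : S * D = D * S + c • 1) :
    S ^ 4 * D ^ 4 = D ^ 4 * S ^ 4 + (16 * c) • (D * S) ^ 3 + (24 * c ^ 2) • (D * S) ^ 2 +
      (56 * c ^ 3) • (D * S) + (24 * c ^ 4) • 1 := by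
  simp only [lowering_pow_succ_mul_raising_pow_succ h, raising_pow_succ_mul_lowering_pow_succ h,
    pow_zero, mul_one]
  generalize D * S = N
  simp only [add_mul, mul_add, sub_mul, mul_sub, smul_mul_assoc, mul_smul_comm, one_mul, mul_one,
    smul_add, smul_sub, smul_smul, pow_succ', pow_zero]
  push_cast
  module

end LadderAlgebra

section AbstractCarleman

open scoped RealInnerProductSpace

variable {V : Type*} [SeminormedAddCommGroup V] [InnerProductSpace ℝ V]

/-- A creation/annihilation pair `(D, S)` of parameter `c`: `S` is a formal adjoint of `D`, and the
commutator `[S, D]` is the scalar `c`. Then `D * S` is the number operator. -/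
structure IsLadderPair (D S : Module.End ℝ V) (c : ℝ) : Prop where
  inner_left : ∀ f g : V, ⟪D f, g⟫ = ⟪f, S g⟫
  commutator : S * D = D * S + c • 1

namespace IsLadderPair

variable {D S T : Module.End ℝ V} {c : ℝ}

lemma inner_pow_left (h : IsLadderPair D S c) (k : ℕ) (f g : V) :
    ⟪(D ^ k) f, g⟫ = ⟪f, (S ^ k) g⟫ := by
  induction k generalizing f with
  | zero => rfl
  | succ k ih => rw [pow_succ, Module.End.mul_apply, ih, h.inner_left, pow_succ',
      Module.End.mul_apply]

lemma norm_pow_raising_sq (h : IsLadderPair D S c) (k : ℕ) (f : V) :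
    ‖(D ^ k) f‖ ^ 2 = ⟪f, (S ^ k * D ^ k) f⟫ := by
  rw [← real_inner_self_eq_norm_sq, h.inner_pow_left, Module.End.mul_apply]

lemma norm_pow_lowering_sq (h : IsLadderPair D S c) (k : ℕ) (f : V) :
    ‖(S ^ k) f‖ ^ 2 = ⟪f, (D ^ k * S ^ k) f⟫ := by
  rw [← real_inner_self_eq_norm_sq, ← h.inner_pow_left, Module.End.mul_apply, real_inner_comm]

lemma isSymmetric_number (h : IsLadderPair D S c) : (D * S).IsSymmetric := fun f g => by
  rw [Module.End.mul_apply, h.inner_left, real_inner_comm, Module.End.mul_apply, ← h.inner_left,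
    real_inner_comm]

lemma inner_number (h : IsLadderPair D S c) (f : V) : ⟪f, (D * S) f⟫ = ‖S f‖ ^ 2 := by
  simpa using (h.norm_pow_lowering_sq 1 f).symm

lemma inner_number_sq (h : IsLadderPair D S c) (f : V) :
    ⟪f, ((D * S) ^ 2) f⟫ = ‖(D * S) f‖ ^ 2 := by
  rw [pow_two, Module.End.mul_apply, ← h.isSymmetric_number, real_inner_self_eq_norm_sq]

lemma inner_number_cube (h : IsLadderPair D S c) (f : V) :
    ⟪f, ((D * S) ^ 3) f⟫ = ‖S ((D * S) f)‖ ^ 2 := by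
  calc ⟪f, ((D * S) ^ 3) f⟫ = ⟪f, (D * S) ((D * S) ((D * S) f))⟫ := rfl
    _ = ‖S ((D * S) f)‖ ^ 2 := by rw [← h.isSymmetric_number, h.inner_number]

lemma norm_raising_sq (h : IsLadderPair D S c) (f : V) :
    ‖D f‖ ^ 2 = ‖S f‖ ^ 2 + c * ‖f‖ ^ 2 := by
  have norm_sq := h.norm_pow_raising_sq 1 f
  rwa [pow_one, pow_one, h.commutator, LinearMap.add_apply, inner_add_right, h.inner_number,
    LinearMap.smul_apply, Module.End.one_apply, real_inner_smul_right,
    real_inner_self_eq_norm_sq] at norm_sq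

lemma norm_raising_pow_two_sq (h : IsLadderPair D S c) (f : V) :
    ‖(D ^ 2) f‖ ^ 2 = ‖(D * S) f‖ ^ 2 + 3 * c * ‖S f‖ ^ 2 + 2 * c ^ 2 * ‖f‖ ^ 2 := by
  rw [h.norm_pow_raising_sq, lowering_sq_mul_raising_sq h.commutator]
  simp only [LinearMap.add_apply, LinearMap.smul_apply, Module.End.one_apply, inner_add_right,
    real_inner_smul_right, h.inner_number_sq, h.inner_number, real_inner_self_eq_norm_sq]

lemma norm_lowering_pow_two_sq (h : IsLadderPair D S c) (f : V) :
    ‖(S ^ 2) f‖ ^ 2 = ‖(D * S) f‖ ^ 2 - c * ‖S f‖ ^ 2 := by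
  rw [h.norm_pow_lowering_sq, raising_sq_mul_lowering_sq h.commutator]
  simp only [LinearMap.sub_apply, LinearMap.smul_apply, inner_sub_right,
    real_inner_smul_right, h.inner_number_sq, h.inner_number]

lemma norm_raising_pow_four_sq (h : IsLadderPair D S c) (f : V) :
    ‖(D ^ 4) f‖ ^ 2 = ‖(S ^ 4) f‖ ^ 2 + 16 * c * ‖S ((D * S) f)‖ ^ 2 +
      24 * c ^ 2 * ‖(D * S) f‖ ^ 2 + 56 * c ^ 3 * ‖S f‖ ^ 2 + 24 * c ^ 4 * ‖f‖ ^ 2 := by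
  rw [h.norm_pow_raising_sq, lowering_pow_four_mul_raising_pow_four h.commutator,
    h.norm_pow_lowering_sq]
  simp only [LinearMap.add_apply, LinearMap.smul_apply, Module.End.one_apply, inner_add_right,
    real_inner_smul_right, h.inner_number_cube, h.inner_number_sq, h.inner_number,
    real_inner_self_eq_norm_sq]

/-- The cross terms with `T` cancel between `D ^ 4 + T` and its adjoint `S ^ 4 + T`. -/
lemma norm_raising_pow_four_add_sq (h : IsLadderPair D S c) (hT : T.IsSymmetric)
    (hTD : Commute T D) (f : V) :
    ‖(D ^ 4 + T) f‖ ^ 2 = ‖(S ^ 4 + T) f‖ ^ 2 + 16 * c * ‖S ((D * S) f)‖ ^ 2 +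
      24 * c ^ 2 * ‖(D * S) f‖ ^ 2 + 56 * c ^ 3 * ‖S f‖ ^ 2 + 24 * c ^ 4 * ‖f‖ ^ 2 := by
  have cross : ⟪(S ^ 4) f, T f⟫ = ⟪(D ^ 4) f, T f⟫ := by
    calc ⟪(S ^ 4) f, T f⟫ = ⟪f, (D ^ 4 * T) f⟫ := by
          rw [real_inner_comm, ← h.inner_pow_left, real_inner_comm, Module.End.mul_apply]
      _ = ⟪(D ^ 4) f, T f⟫ := by
          rw [← (hTD.pow_right 4).eq, Module.End.mul_apply, ← hT, real_inner_comm]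
  rw [LinearMap.add_apply, LinearMap.add_apply, norm_add_sq_real, norm_add_sq_real, cross,
    h.norm_raising_pow_four_sq]
  ring

lemma norm_raising_pow_four_add_sq_ge (h : IsLadderPair D S c) (hc : 0 ≤ c) (hT : T.IsSymmetric)
    (hTD : Commute T D) (f : V) :
    24 * (c ^ 2 * ‖(D * S) f‖ ^ 2 + c ^ 3 * ‖S f‖ ^ 2 + c ^ 4 * ‖f‖ ^ 2) ≤
      ‖(D ^ 4 + T) f‖ ^ 2 := by
  rw [h.norm_raising_pow_four_add_sq hT hTD]
  have : 0 ≤ c ^ 3 * ‖S f‖ ^ 2 := by positivity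
  have : 0 ≤ c * ‖S ((D * S) f)‖ ^ 2 := by positivity
  linarith [sq_nonneg ‖(S ^ 4 + T) f‖]

lemma pow_four_mul_norm_sq_le (h : IsLadderPair D S c) (hc : 0 ≤ c) (hT : T.IsSymmetric)
    (hTD : Commute T D) (f : V) : 24 * (c ^ 4 * ‖f‖ ^ 2) ≤ ‖(D ^ 4 + T) f‖ ^ 2 := by
  have lower_bound := h.norm_raising_pow_four_add_sq_ge hc hT hTD f
  have : 0 ≤ c ^ 2 * ‖(D * S) f‖ ^ 2 := by positivity
  have : 0 ≤ c ^ 3 * ‖S f‖ ^ 2 := by positivity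
  linarith

lemma cube_mul_norm_raising_sq_le (h : IsLadderPair D S c) (hc : 0 ≤ c) (hT : T.IsSymmetric)
    (hTD : Commute T D) (f : V) : c ^ 3 * ‖D f‖ ^ 2 ≤ ‖(D ^ 4 + T) f‖ ^ 2 := by
  have lower_bound := h.norm_raising_pow_four_add_sq_ge hc hT hTD f
  have : 0 ≤ c ^ 2 * ‖(D * S) f‖ ^ 2 := by positivity
  have : 0 ≤ c ^ 3 * ‖S f‖ ^ 2 := by positivity
  have : 0 ≤ c ^ 4 * ‖f‖ ^ 2 := by positivity
  rw [h.norm_raising_sq]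
  linarith

lemma sq_mul_inner_le (h : IsLadderPair D S c) (hc : 0 ≤ c) (hT : T.IsSymmetric)
    (hTD : Commute T D) (f : V) :
    c ^ 2 * ⟪T f, f⟫ ≤ 9 / 16 * ‖(D ^ 4 + T) f‖ ^ 2 := by
  have split : ⟪T f, f⟫ = ⟪(D ^ 4 + T) f, f⟫ - ⟪(D ^ 2) f, (S ^ 2) f⟫ := by
    rw [← h.inner_pow_left, LinearMap.add_apply, inner_add_left, ← Module.End.mul_apply, ← pow_add]
    ring
  have operator_term : c ^ 2 * ⟪(D ^ 4 + T) f, f⟫ ≤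
      (‖(D ^ 4 + T) f‖ ^ 2 + c ^ 4 * ‖f‖ ^ 2) / 2 := by
    nlinarith [sq_nonneg (‖(D ^ 4 + T) f‖ - c ^ 2 * ‖f‖), sq_nonneg c,
      real_inner_le_norm ((D ^ 4 + T) f) f]
  have ladder_term : -⟪(D ^ 2) f, (S ^ 2) f⟫ ≤
      ‖(D * S) f‖ ^ 2 + c * ‖S f‖ ^ 2 + c ^ 2 * ‖f‖ ^ 2 := by
    have sum_nonneg := sq_nonneg ‖(D ^ 2) f + (S ^ 2) f‖
    rw [norm_add_sq_real, h.norm_raising_pow_two_sq, h.norm_lowering_pow_two_sq] at sum_nonneg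
    linarith
  have := mul_le_mul_of_nonneg_left ladder_term (sq_nonneg c)
  have lower_bound := h.norm_raising_pow_four_add_sq_ge hc hT hTD f
  have : 0 ≤ c ^ 2 * ‖(D * S) f‖ ^ 2 := by positivity
  have : 0 ≤ c ^ 3 * ‖S f‖ ^ 2 := by positivity
  rw [split]
  linarith

lemma cube_mul_norm_skew_sq_le (h : IsLadderPair D S c) (hc : 0 ≤ c) (hT : T.IsSymmetric)
    (hTD : Commute T D) {X : Module.End ℝ V} (hX : ∀ f g : V, ⟪X f, g⟫ = -⟪f, X g⟫)
    (hXT : ∀ f : V, ‖(X ^ 2) f‖ ^ 2 ≤ ⟪T f, f⟫) (f : V) :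
    c ^ 3 * ‖X f‖ ^ 2 ≤ ‖(D ^ 4 + T) f‖ ^ 2 := by
  have norm_sq : ‖X f‖ ^ 2 = -⟪(X ^ 2) f, f⟫ := by
    rw [← real_inner_self_eq_norm_sq, pow_two, Module.End.mul_apply, hX (X f), neg_neg]
  have young : c * ‖X f‖ ^ 2 ≤ (‖(X ^ 2) f‖ ^ 2 + c ^ 2 * ‖f‖ ^ 2) / 2 := by
    have sum_nonneg := sq_nonneg ‖(X ^ 2) f + c • f‖
    rw [norm_add_sq_real, real_inner_smul_right, norm_smul, mul_pow, norm_eq_abs,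
      sq_abs] at sum_nonneg
    rw [norm_sq]
    linarith
  have := mul_le_mul_of_nonneg_left young (sq_nonneg c)
  have := mul_le_mul_of_nonneg_left (hXT f) (sq_nonneg c)
  have := h.sq_mul_inner_le hc hT hTD f
  have := h.pow_four_mul_norm_sq_le hc hT hTD f
  linarith [sq_nonneg ‖(D ^ 4 + T) f‖]

end IsLadderPair

section SkewFamily

variable {ι : Type*} {J : Finset ι} {X : ι → Module.End ℝ V}

lemma inner_sum_pow_four_of_skew (hX : ∀ j ∈ J, ∀ f g : V, ⟪X j f, g⟫ = -⟪f, X j g⟫) (f g : V) :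
    ⟪(∑ j ∈ J, X j ^ 4) f, g⟫ = ∑ j ∈ J, ⟪(X j ^ 2) f, (X j ^ 2) g⟫ := by
  rw [LinearMap.sum_apply, sum_inner]
  refine Finset.sum_congr rfl fun j hj => ?_
  calc ⟪(X j ^ 4) f, g⟫ = ⟪X j (X j ((X j ^ 2) f)), g⟫ := rfl
    _ = ⟪(X j ^ 2) f, (X j ^ 2) g⟫ := by rw [hX j hj, hX j hj, neg_neg]; rfl

/-- In the application `D = ∂ₘ`, the formal adjoint `S` is taken in a Gaussian-weighted `L²` space,
and the `X j` are the derivatives transversal to the weight. -/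
theorem IsLadderPair.carleman {D S : Module.End ℝ V} {c : ℝ} (h : IsLadderPair D S c) (hc : 0 ≤ c)
    (hX : ∀ j ∈ J, ∀ f g : V, ⟪X j f, g⟫ = -⟪f, X j g⟫) (hXD : ∀ j ∈ J, Commute (X j) D) (f : V) :
    c ^ 4 * ‖f‖ ^ 2 ≤ ‖(D ^ 4 + ∑ j ∈ J, X j ^ 4) f‖ ^ 2 ∧
      c ^ 3 * ‖D f‖ ^ 2 ≤ ‖(D ^ 4 + ∑ j ∈ J, X j ^ 4) f‖ ^ 2 ∧
      ∀ j ∈ J, c ^ 3 * ‖X j f‖ ^ 2 ≤ ‖(D ^ 4 + ∑ j ∈ J, X j ^ 4) f‖ ^ 2 := by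
  have hT : (∑ j ∈ J, X j ^ 4).IsSymmetric := fun f g => by
    rw [inner_sum_pow_four_of_skew hX, real_inner_comm, inner_sum_pow_four_of_skew hX]
    simp only [real_inner_comm]
  have hTD : Commute (∑ j ∈ J, X j ^ 4) D :=
    Commute.sum_left _ _ _ fun j hj => (hXD j hj).pow_left 4
  have norm_le_inner : ∀ j ∈ J, ∀ g : V, ‖(X j ^ 2) g‖ ^ 2 ≤ ⟪(∑ j ∈ J, X j ^ 4) g, g⟫ := by
    intro j hj g
    rw [inner_sum_pow_four_of_skew hX]
    simp only [real_inner_self_eq_norm_sq]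
    exact Finset.single_le_sum (f := fun j => ‖(X j ^ 2) g‖ ^ 2) (fun _ _ => sq_nonneg _) hj
  have := h.pow_four_mul_norm_sq_le hc hT hTD f
  have : 0 ≤ c ^ 4 * ‖f‖ ^ 2 := by positivity
  exact ⟨by linarith, h.cube_mul_norm_raising_sq_le hc hT hTD f,
    fun j hj => h.cube_mul_norm_skew_sq_le hc hT hTD (hX j hj) (norm_le_inner j hj) f⟩

end SkewFamily

end AbstractCarleman

section PartialDerivatives

open Filter
open scoped ContDiff Topology Convolution

variable {n : ℕ} {f g : EuclideanSpace ℝ (Fin n) → ℂ} {x : EuclideanSpace ℝ (Fin n)} (j : Fin n)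

lemma contDiffAt_pd {k : WithTop ℕ∞} (hf : ContDiffAt ℝ (k + 1) f x) : ContDiffAt ℝ k (pd j f) x :=
  (hf.fderiv_right le_rfl).clm_apply contDiffAt_const

lemma contDiff_pd {k : WithTop ℕ∞} (hf : ContDiff ℝ (k + 1) f) : ContDiff ℝ k (pd j f) :=
  contDiff_iff_contDiffAt.2 fun _ => contDiffAt_pd j hf.contDiffAt

lemma contDiffAt_pd_iterate {l k : ℕ} (hf : ContDiffAt ℝ (l + k : ℕ) f x) :
    ContDiffAt ℝ l ((pd j)^[k] f) x := by
  induction k generalizing f with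
  | zero => exact hf
  | succ k ih => exact ih (contDiffAt_pd j (by exact_mod_cast hf))

lemma continuousOn_pd_iterate {U : Set (EuclideanSpace ℝ (Fin n))} (hU : IsOpen U) {k : ℕ}
    (hf : ContDiffOn ℝ k f U) : ContinuousOn ((pd j)^[k] f) U := fun x hx => by
  have hfx : ContDiffAt ℝ (0 + k : ℕ) f x := by simpa using hf.contDiffAt (hU.mem_nhds hx)
  exact (contDiffAt_pd_iterate j hfx).continuousAt.continuousWithinAt

lemma continuous_pd_iterate {k : ℕ} (hf : ContDiff ℝ k f) : Continuous ((pd j)^[k] f) :=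
  continuousOn_univ.1 (continuousOn_pd_iterate j isOpen_univ hf.contDiffOn)

lemma tsupport_pd_iterate_subset (f : EuclideanSpace ℝ (Fin n) → ℂ) (k : ℕ) :
    tsupport ((pd j)^[k] f) ⊆ tsupport f := by
  induction k with
  | zero => rfl
  | succ k ih =>
    rw [Function.iterate_succ_apply']
    exact (tsupport_fderiv_apply_subset ℝ _).trans ih

lemma hasCompactSupport_pd_iterate (hf : HasCompactSupport f) (k : ℕ) :
    HasCompactSupport ((pd j)^[k] f) :=
  hf.of_isClosed_subset (isClosed_tsupport _) (tsupport_pd_iterate_subset j f k)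

lemma exists_bound_pd_iterate {k : ℕ} (hf : ContDiff ℝ k f) (hs : HasCompactSupport f) :
    ∃ C, ∀ x, ‖(pd j)^[k] f x‖ ≤ C :=
  (hasCompactSupport_pd_iterate j hs k).exists_bound_of_continuous (continuous_pd_iterate j hf)

lemma pd_iterate_eventuallyEq (h : f =ᶠ[𝓝 x] g) (k : ℕ) : (pd j)^[k] f =ᶠ[𝓝 x] (pd j)^[k] g := by
  induction k generalizing f g with
  | zero => exact h
  | succ _ ih => exact ih ((h.fderiv (𝕜 := ℝ)).mono fun y hy => DFunLike.congr_fun hy _)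

lemma pd_comm (hf : ContDiff ℝ 2 f) (i j : Fin n) : pd i (pd j f) = pd j (pd i f) := by
  have second_derivative : ∀ i j x, pd i (pd j f) x =
      fderiv ℝ (fderiv ℝ f) x (EuclideanSpace.single i 1) (EuclideanSpace.single j 1) := by
    intro i j x
    have hd : DifferentiableAt ℝ (fderiv ℝ f) x :=
      (hf.fderiv_right (m := 1) le_rfl).differentiable one_ne_zero x
    unfold pd
    rw [fderiv_clm_apply hd (differentiableAt_const _)]
    simp
  ext x
  rw [second_derivative, second_derivative]
  exact (hf.contDiffAt.isSymmSndFDerivAt (by simp)) _ _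

lemma hasDerivAt_comp_line {t : ℝ}
    (hf : DifferentiableAt ℝ f (x + t • EuclideanSpace.single j (1 : ℝ))) :
    HasDerivAt (fun s : ℝ => f (x + s • EuclideanSpace.single j (1 : ℝ)))
      (pd j f (x + t • EuclideanSpace.single j (1 : ℝ))) t :=
  hf.hasFDerivAt.comp_hasDerivAt t (by
    simpa using ((hasDerivAt_id t).smul_const (EuclideanSpace.single j (1 : ℝ))).const_add x)

lemma pd_iterate_eq_iteratedDeriv {k : ℕ} (hf : ContDiffAt ℝ k f x) :
    (pd j)^[k] f x =
      iteratedDeriv k (fun t : ℝ => f (x + t • EuclideanSpace.single j (1 : ℝ))) 0 := by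
  induction k generalizing f with
  | zero => simp
  | succ k ih =>
    have tendsto_line :
        Tendsto (fun t : ℝ => x + t • EuclideanSpace.single j (1 : ℝ)) (𝓝 0) (𝓝 x) := by
      have : Continuous fun t : ℝ => x + t • EuclideanSpace.single j (1 : ℝ) := by fun_prop
      simpa using this.tendsto 0
    rw [Function.iterate_succ_apply, ih (contDiffAt_pd j (by exact_mod_cast hf)),
      iteratedDeriv_succ']
    refine EventuallyEq.iteratedDeriv_eq k ?_
    filter_upwards [tendsto_line.eventually (hf.eventually (by simp))] with t ht
    exact (hasDerivAt_comp_line j (ht.differentiableAt (by simp))).deriv.symm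

lemma contDiff_line : ContDiff ℝ ∞ fun t : ℝ => x + t • EuclideanSpace.single j (1 : ℝ) := by
  fun_prop

lemma pd_iterate_mul {k : ℕ} (hf : ContDiffAt ℝ k f x) (hg : ContDiffAt ℝ k g x) :
    (pd j)^[k] (fun y => f y * g y) x =
      ∑ i ∈ Finset.range (k + 1), k.choose i * (pd j)^[i] f x * (pd j)^[k - i] g x := by
  have contDiffAt_comp_line : ∀ {h : EuclideanSpace ℝ (Fin n) → ℂ}, ContDiffAt ℝ k h x →
      ContDiffAt ℝ k (fun t : ℝ => h (x + t • EuclideanSpace.single j (1 : ℝ))) 0 := fun hh =>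
    ContDiffAt.comp (0 : ℝ) (by simpa using hh)
      ((contDiff_line j).contDiffAt.of_le (by exact_mod_cast le_top))
  rw [pd_iterate_eq_iteratedDeriv j (hf.mul hg),
    iteratedDeriv_fun_mul (contDiffAt_comp_line hf) (contDiffAt_comp_line hg)]
  refine Finset.sum_congr rfl fun i hi => ?_
  have hik : i ≤ k := Finset.mem_range_succ_iff.1 hi
  rw [pd_iterate_eq_iteratedDeriv j (hf.of_le (by exact_mod_cast hik)),
    pd_iterate_eq_iteratedDeriv j (hg.of_le (by exact_mod_cast k.sub_le i))]

lemma norm_pd_iterate_mul_le {k : ℕ} (hf : ContDiffAt ℝ k f x) (hg : ContDiffAt ℝ k g x)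
    {C : ℕ → ℝ} (hC : ∀ i ≤ k, ‖(pd j)^[i] f x‖ ≤ C i) :
    ‖(pd j)^[k] (fun y => f y * g y) x‖ ≤
      ∑ i ∈ Finset.range (k + 1), k.choose i * C i * ‖(pd j)^[k - i] g x‖ := by
  rw [pd_iterate_mul j hf hg]
  refine norm_sum_le_of_le _ fun i hi => ?_
  rw [norm_mul, norm_mul, Complex.norm_natCast]
  gcongr
  exact hC i (Finset.mem_range_succ_iff.1 hi)

lemma pd_iterate_comp_smul {k : ℕ} (hf : ContDiff ℝ k f) (s : ℝ) (x : EuclideanSpace ℝ (Fin n)) :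
    (pd j)^[k] (fun y => f (s • y)) x = s ^ k • (pd j)^[k] f (s • x) := by
  have hline : ContDiff ℝ k fun t : ℝ => f (s • x + t • EuclideanSpace.single j (1 : ℝ)) :=
    hf.comp ((contDiff_line j).of_le (by exact_mod_cast le_top))
  have hscaled : ContDiff ℝ k fun y => f (s • y) := hf.comp (contDiff_const_smul s)
  rw [pd_iterate_eq_iteratedDeriv j hscaled.contDiffAt,
    pd_iterate_eq_iteratedDeriv j hf.contDiffAt]
  simpa [smul_add, smul_smul] using congrFun (iteratedDeriv_comp_const_smul hline s) 0

lemma contDiff_coord (m : Fin n) {k : WithTop ℕ∞} :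
    ContDiff ℝ k fun x : EuclideanSpace ℝ (Fin n) => x m :=
  (EuclideanSpace.proj (𝕜 := ℝ) m).contDiff

lemma pd_iterate_comp_coord {k : ℕ} {φ : ℝ → ℂ} (hφ : ContDiff ℝ k φ) (m : Fin n)
    (x : EuclideanSpace ℝ (Fin n)) :
    (pd j)^[k] (fun y => φ (y m)) x =
      EuclideanSpace.single j (1 : ℝ) m ^ k • iteratedDeriv k φ (x m) := by
  have hline : ContDiff ℝ k fun t : ℝ => φ (x m + t) := hφ.comp (contDiff_const.add contDiff_id)
  have hcoord : ContDiff ℝ k fun y : EuclideanSpace ℝ (Fin n) => φ (y m) :=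
    hφ.comp (contDiff_coord m)
  rw [pd_iterate_eq_iteratedDeriv j hcoord.contDiffAt]
  have chain := congrFun
    (iteratedDeriv_comp_const_smul hline (EuclideanSpace.single j (1 : ℝ) m)) 0
  rw [iteratedDeriv_comp_const_add] at chain
  simpa [mul_comm] using chain

lemma norm_pd_iterate_comp_coord_le {k : ℕ} {φ : ℝ → ℂ} (hφ : ContDiff ℝ k φ) (m : Fin n)
    (x : EuclideanSpace ℝ (Fin n)) :
    ‖(pd j)^[k] (fun y => φ (y m)) x‖ ≤ ‖iteratedDeriv k φ (x m)‖ := by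
  rw [pd_iterate_comp_coord j hφ, norm_smul, norm_pow]
  refine mul_le_of_le_one_left (norm_nonneg _) (pow_le_one₀ (norm_nonneg _) ?_)
  simpa using PiLp.norm_apply_le (EuclideanSpace.single j (1 : ℝ)) m

variable {φ : EuclideanSpace ℝ (Fin n) → ℝ}

lemma pd_convolution (hφ : LocallyIntegrable φ) (hf : ContDiff ℝ 1 f) (hs : HasCompactSupport f) :
    pd j (φ ⋆[ContinuousLinearMap.lsmul ℝ ℝ] f) = φ ⋆[ContinuousLinearMap.lsmul ℝ ℝ] pd j f := by
  ext x
  rw [pd, (hs.hasFDerivAt_convolution_right (ContinuousLinearMap.lsmul ℝ ℝ) hφ hf x).fderiv,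
    convolution_precompR_apply _ hφ (hs.fderiv ℝ) (hf.continuous_fderiv one_ne_zero)]
  rfl

lemma pd_iterate_convolution (hφ : LocallyIntegrable φ) {k : ℕ} (hf : ContDiff ℝ k f)
    (hs : HasCompactSupport f) :
    (pd j)^[k] (φ ⋆[ContinuousLinearMap.lsmul ℝ ℝ] f) =
      φ ⋆[ContinuousLinearMap.lsmul ℝ ℝ] (pd j)^[k] f := by
  induction k generalizing f with
  | zero => rfl
  | succ k ih =>
    rw [Function.iterate_succ_apply, Function.iterate_succ_apply,
      pd_convolution j hφ (hf.of_le (by exact_mod_cast k.succ_pos)) hs,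
      ih (contDiff_pd j (by exact_mod_cast hf)) (hasCompactSupport_pd_iterate j hs 1)]

lemma foldr_replicate_pd (f : EuclideanSpace ℝ (Fin n) → ℂ) (k : ℕ) :
    (List.replicate k j).foldr pd f = (pd j)^[k] f := by
  induction k with
  | zero => rfl
  | succ k ih => rw [List.replicate_succ, List.foldr_cons, ih, Function.iterate_succ_apply']

end PartialDerivatives

section GaussianMeasure

open scoped ContDiff ENNReal

variable {n : ℕ} (m : Fin n) (c γ : ℝ)

/-- The Gaussian Carleman weight `exp (2 φ)`, for the phase `φ x = γ (x m - c)² / 4`. -/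
def carlemanWeight (x : EuclideanSpace ℝ (Fin n)) : ℝ :=
  Real.exp (γ * (x m - c) ^ 2 / 2)

/-- Lebesgue measure weighted by `carlemanWeight m c γ`. -/
def carlemanMeasure : Measure (EuclideanSpace ℝ (Fin n)) :=
  volume.withDensity fun x => ENNReal.ofReal (carlemanWeight m c γ x)

lemma contDiff_carlemanWeight :
    ContDiff ℝ ∞ (carlemanWeight m c γ : EuclideanSpace ℝ (Fin n) → ℝ) :=
  ((contDiff_const.mul (((contDiff_coord m).sub contDiff_const).pow 2)).div_const 2).exp

lemma fderiv_carlemanWeight (x v : EuclideanSpace ℝ (Fin n)) :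
    fderiv ℝ (carlemanWeight m c γ) x v = carlemanWeight m c γ x * (γ * (x m - c) * v m) := by
  have hasFDerivAt_coord : HasFDerivAt (fun x : EuclideanSpace ℝ (Fin n) => x m)
      (EuclideanSpace.proj (𝕜 := ℝ) m) x := (EuclideanSpace.proj (𝕜 := ℝ) m).hasFDerivAt
  have weight_eq : carlemanWeight m c γ = fun x => Real.exp (γ / 2 * (x m - c) ^ 2) :=
    funext fun x => congrArg Real.exp (by ring)
  rw [weight_eq, (((hasFDerivAt_coord.sub_const c).pow 2).const_mul (γ / 2)).exp.fderiv]
  simp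
  ring

instance : IsLocallyFiniteMeasure (carlemanMeasure m c γ) :=
  .withDensity_ofReal (contDiff_carlemanWeight m c γ).continuous

lemma integral_carlemanMeasure (g : EuclideanSpace ℝ (Fin n) → ℝ) :
    ∫ x, g x ∂carlemanMeasure m c γ = ∫ x, carlemanWeight m c γ x * g x := by
  have hmeas := (contDiff_carlemanWeight m c γ).continuous.measurable.ennreal_ofReal
  rw [carlemanMeasure, integral_withDensity_eq_integral_toReal_smul hmeas (by simp)]
  simp [ENNReal.toReal_ofReal, carlemanWeight, Real.exp_nonneg]

lemma carlemanMeasure_zero : carlemanMeasure m c 0 = volume := by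
  simp [carlemanMeasure, carlemanWeight]

variable {m c γ} {r : ℝ} {A : Set (EuclideanSpace ℝ (Fin n))}

lemma carlemanMeasure_restrict_le (hγ : 0 ≤ γ) (hA : MeasurableSet A)
    (hr : ∀ x ∈ A, |x m - c| ≤ r) :
    (carlemanMeasure m c γ).restrict A ≤
      ENNReal.ofReal (Real.exp (γ * r ^ 2 / 2)) • volume.restrict A := by
  rw [carlemanMeasure, restrict_withDensity hA, ← withDensity_const]
  refine withDensity_mono ((ae_restrict_iff' hA).2 (.of_forall fun x hx => ?_))
  have := sq_le_sq' (neg_le_of_abs_le (hr x hx)) (le_of_abs_le (hr x hx))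
  exact ENNReal.ofReal_le_ofReal (Real.exp_le_exp.2 (by gcongr))

lemma smul_restrict_le_carlemanMeasure (hγ : 0 ≤ γ) (hA : MeasurableSet A) (hr₀ : 0 ≤ r)
    (hr : ∀ x ∈ A, r ≤ |x m - c|) :
    ENNReal.ofReal (Real.exp (γ * r ^ 2 / 2)) • volume.restrict A ≤ carlemanMeasure m c γ := by
  refine le_trans ?_ (Measure.restrict_le_self (s := A))
  rw [carlemanMeasure, restrict_withDensity hA, ← withDensity_const]
  refine withDensity_mono ((ae_restrict_iff' hA).2 (.of_forall fun x hx => ?_))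
  have : r ^ 2 ≤ (x m - c) ^ 2 := by
    rw [← sq_abs (x m - c)]
    exact pow_le_pow_left₀ hr₀ (hr x hx) 2
  exact ENNReal.ofReal_le_ofReal (Real.exp_le_exp.2 (by gcongr))

lemma setIntegral_carlemanMeasure_le (hγ : 0 ≤ γ) (hA : MeasurableSet A)
    (hr : ∀ x ∈ A, |x m - c| ≤ r) {f : EuclideanSpace ℝ (Fin n) → ℝ} (hf₀ : 0 ≤ f)
    (hf : IntegrableOn f A) :
    ∫ x in A, f x ∂carlemanMeasure m c γ ≤ Real.exp (γ * r ^ 2 / 2) * ∫ x in A, f x := by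
  refine (integral_mono_measure (carlemanMeasure_restrict_le hγ hA hr) (.of_forall hf₀)
    (hf.smul_measure ENNReal.ofReal_ne_top)).trans_eq ?_
  rw [integral_smul_measure, ENNReal.toReal_ofReal (Real.exp_nonneg _), smul_eq_mul]

lemma exp_mul_setIntegral_le (hγ : 0 ≤ γ) (hA : MeasurableSet A) (hr₀ : 0 ≤ r)
    (hr : ∀ x ∈ A, r ≤ |x m - c|) {f : EuclideanSpace ℝ (Fin n) → ℝ} (hf₀ : 0 ≤ f)
    (hf : Integrable f (carlemanMeasure m c γ)) :
    Real.exp (γ * r ^ 2 / 2) * ∫ x in A, f x ≤ ∫ x, f x ∂carlemanMeasure m c γ := by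
  refine le_of_eq_of_le ?_ (integral_mono_measure
    (smul_restrict_le_carlemanMeasure hγ hA hr₀ hr) (.of_forall hf₀) hf)
  rw [integral_smul_measure, ENNReal.toReal_ofReal (Real.exp_nonneg _), smul_eq_mul]

end GaussianMeasure

section TestFunctions

open scoped ContDiff RealInnerProductSpace

variable {n : ℕ}

/-- The space `C_c^∞(ℝⁿ; ℂ)`, regarded as a real vector space. -/
def testFunctions (n : ℕ) : Submodule ℝ (EuclideanSpace ℝ (Fin n) → ℂ) where
  carrier := {f | ContDiff ℝ ∞ f ∧ HasCompactSupport f}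
  add_mem' hf hg := ⟨hf.1.add hg.1, hf.2.add hg.2⟩
  zero_mem' := ⟨contDiff_const, HasCompactSupport.zero⟩
  smul_mem' c _ hf := ⟨contDiff_const.smul hf.1,
    hf.2.mono fun x hx h => hx (by simp [show _ = _ from h])⟩

/-- The principal part `∑ⱼ ∂ⱼ⁴` of `opL`. -/
def quarticOp (u : EuclideanSpace ℝ (Fin n) → ℂ) : EuclideanSpace ℝ (Fin n) → ℂ :=
  fun x => ∑ j, (pd j)^[4] u x

/-- The a priori estimate for `quarticOp` in the space `L²` of `carlemanMeasure m c γ`. -/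
def CarlemanEstimate (m : Fin n) (c γ : ℝ) (f : EuclideanSpace ℝ (Fin n) → ℂ) : Prop :=
  γ ^ 4 * ∫ x, ‖f x‖ ^ 2 ∂carlemanMeasure m c γ ≤
      ∫ x, ‖quarticOp f x‖ ^ 2 ∂carlemanMeasure m c γ ∧
    ∀ j, γ ^ 3 * ∫ x, ‖pd j f x‖ ^ 2 ∂carlemanMeasure m c γ ≤
      ∫ x, ‖quarticOp f x‖ ^ 2 ∂carlemanMeasure m c γ

namespace testFunctions

lemma differentiable (f : testFunctions n) : Differentiable ℝ f.1 :=
  f.2.1.differentiable (by simp)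

/-- The partial derivative `∂ⱼ` on test functions. -/
def pdEnd (j : Fin n) : Module.End ℝ (testFunctions n) where
  toFun f := ⟨pd j f.1, contDiff_pd j f.2.1, hasCompactSupport_pd_iterate j f.2.2 1⟩
  map_add' f g := Subtype.ext <| funext fun x => by
    simp [pd, fderiv_add (differentiable f x) (differentiable g x)]
  map_smul' r f := Subtype.ext <| funext fun x => by
    simp [pd, fderiv_const_smul (differentiable f x)]

/-- Multiplication by `x m - c` on test functions. -/
def coordEnd (m : Fin n) (c : ℝ) : Module.End ℝ (testFunctions n) where
  toFun f := ⟨fun x => (x m - c) • f.1 x,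
    ((contDiff_coord m (k := ∞)).sub contDiff_const).smul f.2.1,
    f.2.2.mono fun x hx h => hx (by simp [show f.1 x = 0 from h])⟩
  map_add' f g := Subtype.ext <| funext fun x => smul_add _ _ _
  map_smul' r f := Subtype.ext <| funext fun x => smul_comm (x m - c) r (f.1 x)

lemma commute_pdEnd (i j : Fin n) : Commute (pdEnd i) (pdEnd j) :=
  LinearMap.ext fun f => Subtype.ext (pd_comm (f.2.1.of_le ENat.LEInfty.out) i j)

lemma pdEnd_mul_coordEnd (m : Fin n) (c : ℝ) :
    pdEnd m * coordEnd m c = coordEnd m c * pdEnd m + 1 := by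
  refine LinearMap.ext fun f => Subtype.ext (funext fun x => ?_)
  have hasFDerivAt_coord : HasFDerivAt (fun x : EuclideanSpace ℝ (Fin n) => x m - c)
      (EuclideanSpace.proj (𝕜 := ℝ) m) x :=
    (EuclideanSpace.proj (𝕜 := ℝ) m).hasFDerivAt.sub_const c
  change fderiv ℝ (fun x => (x m - c) • f.1 x) x (EuclideanSpace.single m 1) =
    (x m - c) • pd m f.1 x + f.1 x
  rw [(hasFDerivAt_coord.fun_smul (differentiable f x).hasFDerivAt).fderiv]
  simp [pd]

/-- The formal adjoint of `∂ₘ` in the space `L²` of `carlemanMeasure m c γ`. -/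
def lowering (m : Fin n) (c γ : ℝ) : Module.End ℝ (testFunctions n) :=
  -pdEnd m - γ • coordEnd m c

lemma lowering_mul_pdEnd (m : Fin n) (c γ : ℝ) :
    lowering m c γ * pdEnd m = pdEnd m * lowering m c γ + γ • 1 := by
  refine LinearMap.ext fun f => ?_
  have pd_coord : pdEnd m (coordEnd m c f) = coordEnd m c (pdEnd m f) + f :=
    LinearMap.congr_fun (pdEnd_mul_coordEnd m c) f
  simp only [lowering, Module.End.mul_apply, LinearMap.add_apply, LinearMap.sub_apply,
    LinearMap.neg_apply, LinearMap.smul_apply, Module.End.one_apply, map_sub, map_neg, map_smul,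
    pd_coord]
  module

lemma integrable_inner (f : testFunctions n) {g : EuclideanSpace ℝ (Fin n) → ℂ}
    (hg : Continuous g) (μ : Measure (EuclideanSpace ℝ (Fin n))) [IsFiniteMeasureOnCompacts μ] :
    Integrable (fun x => ⟪f.1 x, g x⟫) μ :=
  (f.2.1.continuous.inner hg).integrable_of_hasCompactSupport
    (f.2.2.mono fun x hx h => hx (by simp [show f.1 x = 0 from h]))

lemma integral_inner_pd (f : testFunctions n) {g : EuclideanSpace ℝ (Fin n) → ℂ}
    (hg : ContDiff ℝ 1 g) (j : Fin n) : ∫ x, ⟪pd j f.1 x, g x⟫ = -∫ x, ⟪f.1 x, pd j g x⟫ := by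
  rw [eq_comm, neg_eq_iff_eq_neg]
  exact integral_bilinear_fderiv_right_eq_neg_left_of_integrable (B := innerSL ℝ)
    (integrable_inner (pdEnd j f) hg.continuous volume)
    (integrable_inner f (contDiff_pd j (k := 0) hg).continuous volume)
    (integrable_inner f hg.continuous volume) (fun x _ => differentiable f x)
    (fun x _ => hg.differentiable one_ne_zero x)

lemma pd_carlemanWeight_smul (m j : Fin n) (c γ : ℝ) (g : testFunctions n)
    (x : EuclideanSpace ℝ (Fin n)) :
    pd j (fun x => carlemanWeight m c γ x • g.1 x) x = carlemanWeight m c γ x •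
      (pd j g.1 x + (γ * EuclideanSpace.single j (1 : ℝ) m) • (x m - c) • g.1 x) := by
  have hweight := (contDiff_carlemanWeight m c γ).differentiable (by simp) x
  rw [pd, fderiv_fun_smul hweight (differentiable g x)]
  simp only [add_apply, smul_apply,
    ContinuousLinearMap.smulRight_apply, fderiv_carlemanWeight, smul_add, smul_smul, pd]
  ring_nf

lemma integral_inner_pd_carlemanMeasure (m j : Fin n) (c γ : ℝ) (f g : testFunctions n) :
    ∫ x, ⟪pd j f.1 x, g.1 x⟫ ∂carlemanMeasure m c γ =
      ∫ x, ⟪f.1 x, -pd j g.1 x - (γ * EuclideanSpace.single j (1 : ℝ) m) • (x m - c) • g.1 x⟫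
        ∂carlemanMeasure m c γ := by
  have hweighted : ContDiff ℝ 1 fun x => carlemanWeight m c γ x • g.1 x :=
    ((contDiff_carlemanWeight m c γ).smul g.2.1).of_le ENat.LEInfty.out
  simp only [integral_carlemanMeasure, ← real_inner_smul_right]
  rw [integral_inner_pd f hweighted, ← integral_neg]
  refine integral_congr_ae (.of_forall fun x => ?_)
  simp only [pd_carlemanWeight_smul, ← inner_neg_right, ← smul_neg, neg_add']

/-- The real inner product of `L²(μ; ℂ)` on test functions. It is only semidefinite when `μ`
vanishes on some open set. -/
abbrev innerCore (μ : Measure (EuclideanSpace ℝ (Fin n))) [IsFiniteMeasureOnCompacts μ] :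
    PreInnerProductSpace.Core ℝ (testFunctions n) where
  inner f g := ∫ x, ⟪f.1 x, g.1 x⟫ ∂μ
  conj_inner_symm f g := by simp [real_inner_comm]
  re_inner_nonneg f := integral_nonneg fun x => real_inner_self_nonneg
  add_left f g h := by
    simp only [Submodule.coe_add, Pi.add_apply, inner_add_left]
    exact integral_add (integrable_inner f h.2.1.continuous μ)
      (integrable_inner g h.2.1.continuous μ)
  smul_left f g r := by
    simp only [Submodule.coe_smul, Pi.smul_apply, real_inner_smul_left, integral_const_mul,
      conj_trivial]

lemma coe_pdEnd_pow_four_add_sum (m : Fin n) (f : testFunctions n) :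
    ((pdEnd m ^ 4 + ∑ j ∈ Finset.univ.erase m, pdEnd j ^ 4) f).1 = quarticOp f.1 := by
  rw [Finset.add_sum_erase Finset.univ (fun j => pdEnd j ^ 4) (Finset.mem_univ m)]
  ext x
  rw [LinearMap.sum_apply, AddSubmonoidClass.coe_finsetSum, Finset.sum_apply]
  rfl

theorem carlemanEstimate {γ : ℝ} (hγ : 0 ≤ γ) (m : Fin n) (c : ℝ) (f : testFunctions n) :
    CarlemanEstimate m c γ f.1 := by
  let _ := innerCore (n := n) (carlemanMeasure m c γ)
  let _ : SeminormedAddCommGroup (testFunctions n) :=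
    InnerProductSpace.Core.toSeminormedAddCommGroup (𝕜 := ℝ)
  let _ : InnerProductSpace ℝ (testFunctions n) := InnerProductSpace.ofCore _
  have isLadderPair : IsLadderPair (pdEnd m) (lowering m c γ) γ := by
    refine ⟨fun f g => ?_, lowering_mul_pdEnd m c γ⟩
    have parts := integral_inner_pd_carlemanMeasure m m c γ f g
    rwa [PiLp.single_apply, if_pos rfl, mul_one] at parts
  have skew : ∀ j ∈ Finset.univ.erase m, ∀ f g : testFunctions n,
      inner ℝ (pdEnd j f) g = -inner ℝ f (pdEnd j g) := by
    intro j hj f g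
    have parts := integral_inner_pd_carlemanMeasure m j c γ f g
    simp only [PiLp.single_apply, if_neg (Finset.ne_of_mem_erase hj).symm, mul_zero,
      zero_smul, sub_zero, inner_neg_right, integral_neg] at parts
    exact parts
  have norm_sq (g : testFunctions n) :
      ‖g‖ ^ 2 = ∫ x, ‖g.1 x‖ ^ 2 ∂carlemanMeasure m c γ := by
    simp only [← real_inner_self_eq_norm_sq]
    rfl
  obtain ⟨estimate, estimate_pd_self, estimate_pd⟩ :=
    isLadderPair.carleman hγ skew (fun j _ => commute_pdEnd j m) f
  simp only [norm_sq, coe_pdEnd_pow_four_add_sum] at estimate estimate_pd_self estimate_pd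
  refine ⟨estimate, fun j => ?_⟩
  obtain rfl | hj := eq_or_ne j m
  · exact estimate_pd_self
  · exact estimate_pd j (Finset.mem_erase.2 ⟨hj, Finset.mem_univ j⟩)

end testFunctions

end TestFunctions

section DominatedConvergence

open Filter
open scoped Topology

variable {α F : Type*} [MeasurableSpace α] [NormedAddCommGroup F] {μ : Measure α}

/-- Dominated convergence in `L²(μ)`: pointwise convergence of a sequence of functions that has a
square-integrable majorant. -/
structure TendstoDominated (f : ℕ → α → F) (f₀ : α → F) (μ : Measure α) : Prop where
  aestronglyMeasurable : ∀ N, AEStronglyMeasurable (f N) μ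
  exists_bound : ∃ G : α → ℝ, MemLp G 2 μ ∧ ∀ N x, ‖f N x‖ ≤ G x
  tendsto : ∀ x, Tendsto (fun N => f N x) atTop (𝓝 (f₀ x))

lemma TendstoDominated.sum {ι : Type*} {s : Finset ι} {f : ι → ℕ → α → F} {f₀ : ι → α → F}
    (h : ∀ i ∈ s, TendstoDominated (f i) (f₀ i) μ) :
    TendstoDominated (fun N x => ∑ i ∈ s, f i N x) (fun x => ∑ i ∈ s, f₀ i x) μ where
  aestronglyMeasurable N := Finset.aestronglyMeasurable_fun_sum s
    fun i hi => (h i hi).aestronglyMeasurable N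
  exists_bound := by
    choose! G hG hbound using fun i hi => (h i hi).exists_bound
    exact ⟨fun x => ∑ i ∈ s, G i x, memLp_finsetSum s hG,
      fun N x => norm_sum_le_of_le s fun i hi => hbound i hi N x⟩
  tendsto x := tendsto_finsetSum s fun i hi => (h i hi).tendsto x

lemma TendstoDominated.tendsto_integral_norm_sq {f : ℕ → α → F} {f₀ : α → F}
    (h : TendstoDominated f f₀ μ) :
    Tendsto (fun N => ∫ x, ‖f N x‖ ^ 2 ∂μ) atTop (𝓝 (∫ x, ‖f₀ x‖ ^ 2 ∂μ)) := by
  obtain ⟨G, hG, hbound⟩ := h.exists_bound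
  refine tendsto_integral_of_dominated_convergence (fun x => G x ^ 2)
    (fun N => (h.aestronglyMeasurable N).norm.pow 2) hG.integrable_sq
    (fun N => .of_forall fun x => ?_) (.of_forall fun x => (h.tendsto x).norm.pow 2)
  rw [norm_pow, norm_norm]
  exact pow_le_pow_left₀ (norm_nonneg _) (hbound N x) 2

end DominatedConvergence

section Mollification

open Filter
open scoped ContDiff Topology Convolution

lemma exists_contDiffBump_seq (E : Type*) [NormedAddCommGroup E] [NormedSpace ℝ E] :
    ∃ φ : ℕ → ContDiffBump (0 : E),
      (∀ N, (φ N).rOut ≤ 1) ∧ Tendsto (fun N => (φ N).rOut) atTop (𝓝 0) := by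
  refine ⟨fun N => ⟨1 / (N + 1) / 2, 1 / (N + 1), by positivity, half_lt_self (by positivity)⟩,
    fun N => ?_, tendsto_one_div_add_atTop_nhds_zero_nat⟩
  exact div_le_one_of_le₀ (by simp) (by positivity)

variable {E F : Type*} [NormedAddCommGroup E] [NormedSpace ℝ E] [FiniteDimensional ℝ E]
  [MeasurableSpace E] [BorelSpace E] [HasContDiffBump E]
  [NormedAddCommGroup F] [NormedSpace ℝ F] [CompleteSpace F]
  {ν μ : Measure E} [ν.IsAddHaarMeasure] [IsFiniteMeasureOnCompacts μ]

lemma norm_normed_convolution_le_indicator {φ : ContDiffBump (0 : E)} (hφ : φ.rOut ≤ 1)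
    {g : E → F} (hg : AEStronglyMeasurable g ν) {C : ℝ} (hC : ∀ x, ‖g x‖ ≤ C) (x : E) :
    ‖(φ.normed ν ⋆[ContinuousLinearMap.lsmul ℝ ℝ, ν] g) x‖ ≤
      (Metric.cthickening 1 (tsupport g)).indicator (fun _ => C) x := by
  have indicator_nonneg : 0 ≤ (Metric.cthickening 1 (tsupport g)).indicator (fun _ => C) x :=
    Set.indicator_nonneg (fun y _ => (norm_nonneg _).trans (hC y)) x
  rw [← dist_zero_right]
  refine dist_convolution_le indicator_nonneg φ.support_normed_eq.subset φ.nonneg_normed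
    φ.integral_normed hg fun y hy => ?_
  rw [dist_zero_right]
  by_cases hgy : g y = 0
  · rwa [hgy, norm_zero]
  · rw [Set.indicator_of_mem]
    · exact hC y
    · refine Metric.mem_cthickening_of_dist_le x y 1 _ (subset_tsupport g hgy) ?_
      rw [dist_comm]
      exact (Metric.mem_ball.1 hy).le.trans hφ

lemma tendstoDominated_normed_convolution {φ : ℕ → ContDiffBump (0 : E)}
    (hφ : ∀ N, (φ N).rOut ≤ 1) (hφ₀ : Tendsto (fun N => (φ N).rOut) atTop (𝓝 0)) {g : E → F}
    (hg : Continuous g) (hs : HasCompactSupport g) :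
    TendstoDominated (fun N => (φ N).normed ν ⋆[ContinuousLinearMap.lsmul ℝ ℝ, ν] g) g μ where
  aestronglyMeasurable N := (hs.continuous_convolution_right _
    (φ N).continuous_normed.locallyIntegrable hg).aestronglyMeasurable
  exists_bound := by
    obtain ⟨C, hC⟩ := hs.exists_bound_of_continuous hg
    exact ⟨_, memLp_indicator_const 2 Metric.isClosed_cthickening.measurableSet C
        (.inr hs.isCompact.cthickening.measure_lt_top.ne),
      fun N => norm_normed_convolution_le_indicator (hφ N) hg.aestronglyMeasurable hC⟩
  tendsto := ContDiffBump.convolution_tendsto_right_of_continuous hφ₀ hg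

end Mollification

section Extension

open Filter
open scoped ContDiff Topology Convolution

variable {n : ℕ} {m j : Fin n} {c γ : ℝ} {f g : EuclideanSpace ℝ (Fin n) → ℂ}
  {μ : Measure (EuclideanSpace ℝ (Fin n))}

lemma CarlemanEstimate.of_tendstoDominated {F : ℕ → EuclideanSpace ℝ (Fin n) → ℂ}
    (hF : ∀ N, CarlemanEstimate m c γ (F N))
    (hlim : ∀ j, ∀ k ≤ 4,
      TendstoDominated (fun N => (pd j)^[k] (F N)) ((pd j)^[k] f) (carlemanMeasure m c γ)) :
    CarlemanEstimate m c γ f := by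
  have hquartic := (TendstoDominated.sum (s := Finset.univ)
    fun j _ => hlim j 4 le_rfl).tendsto_integral_norm_sq
  have limit_le : ∀ j, ∀ k ≤ 4, ∀ C : ℝ,
      (∀ N, C * ∫ x, ‖(pd j)^[k] (F N) x‖ ^ 2 ∂carlemanMeasure m c γ ≤
        ∫ x, ‖quarticOp (F N) x‖ ^ 2 ∂carlemanMeasure m c γ) →
      C * ∫ x, ‖(pd j)^[k] f x‖ ^ 2 ∂carlemanMeasure m c γ ≤
        ∫ x, ‖quarticOp f x‖ ^ 2 ∂carlemanMeasure m c γ := fun j k hk C =>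
    le_of_tendsto_of_tendsto' ((hlim j k hk).tendsto_integral_norm_sq.const_mul C) hquartic
  exact ⟨limit_le m 0 (by simp) _ fun N => (hF N).1,
    fun j => limit_le j 1 (by simp) _ fun N => (hF N).2 j⟩

lemma carlemanEstimate_of_hasCompactSupport (hγ : 0 ≤ γ) (hf : ContDiff ℝ 4 f)
    (hs : HasCompactSupport f) : CarlemanEstimate m c γ f := by
  obtain ⟨φ, hφ, hφ₀⟩ := exists_contDiffBump_seq (EuclideanSpace ℝ (Fin n))
  refine .of_tendstoDominated
    (F := fun N => (φ N).normed volume ⋆[ContinuousLinearMap.lsmul ℝ ℝ, volume] f)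
    (fun N => ?_) (fun j k hk => ?_)
  · exact testFunctions.carlemanEstimate hγ m c
      ⟨_, (φ N).hasCompactSupport_normed.contDiff_convolution_left _ (φ N).contDiff_normed
        hf.continuous.locallyIntegrable, (φ N).hasCompactSupport_normed.convolution _ hs⟩
  · have hfk : ContDiff ℝ k f := hf.of_le (by exact_mod_cast hk)
    simp only [pd_iterate_convolution j (φ _).continuous_normed.locallyIntegrable hfk hs]
    exact tendstoDominated_normed_convolution hφ hφ₀ (continuous_pd_iterate j hfk)
      (hasCompactSupport_pd_iterate j hs k)

lemma memLp_leibniz_bound {k : ℕ} (hg : ∀ i ≤ k, MemLp ((pd j)^[i] g) 2 μ) (C : ℕ → ℝ) :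
    MemLp (fun x => ∑ i ∈ Finset.range (k + 1), k.choose i * C i * ‖(pd j)^[k - i] g x‖) 2 μ :=
  memLp_finsetSum _ fun i _ => (hg (k - i) (k.sub_le i)).norm.const_mul _

lemma exists_norm_pd_iterate_comp_smul_le {κ : EuclideanSpace ℝ (Fin n) → ℂ} {k : ℕ} (j : Fin n)
    (hκ : ContDiff ℝ k κ) (hs : HasCompactSupport κ) :
    ∃ C, ∀ s : ℝ, |s| ≤ 1 → ∀ x, ‖(pd j)^[k] (fun y => κ (s • y)) x‖ ≤ C := by
  obtain ⟨C, hC⟩ := exists_bound_pd_iterate j hκ hs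
  refine ⟨C, fun s hs x => ?_⟩
  rw [pd_iterate_comp_smul j hκ, norm_smul, norm_pow]
  exact (mul_le_of_le_one_left (norm_nonneg _) (pow_le_one₀ (norm_nonneg s) hs)).trans (hC _)

lemma tendstoDominated_cutoff {κ : EuclideanSpace ℝ (Fin n) → ℂ} {s : ℕ → ℝ} {k : ℕ}
    (hκ : ContDiff ℝ k κ) (hκs : HasCompactSupport κ) (hκ₁ : ∀ᶠ x in 𝓝 0, κ x = 1)
    (hs : ∀ N, |s N| ≤ 1) (hs₀ : Tendsto s atTop (𝓝 0)) (hf : ContDiff ℝ k f)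
    (hL2 : ∀ i ≤ k, MemLp ((pd j)^[i] f) 2 μ) :
    TendstoDominated (fun N => (pd j)^[k] fun x => κ (s N • x) * f x) ((pd j)^[k] f) μ where
  aestronglyMeasurable N :=
    have hcutoff : ContDiff ℝ k fun x => κ (s N • x) := hκ.comp (contDiff_const_smul (s N))
    (continuous_pd_iterate j (hcutoff.mul hf)).aestronglyMeasurable
  exists_bound := by
    have hbound : ∀ i ≤ k, ∃ C, ∀ s : ℝ, |s| ≤ 1 → ∀ x,
        ‖(pd j)^[i] (fun y => κ (s • y)) x‖ ≤ C := fun i hi =>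
      exists_norm_pd_iterate_comp_smul_le j (hκ.of_le (by exact_mod_cast hi)) hκs
    choose! C hC using hbound
    exact ⟨_, memLp_leibniz_bound hL2 C, fun N x => norm_pd_iterate_mul_le j
      (hκ.comp (contDiff_const_smul (s N))).contDiffAt hf.contDiffAt
      fun i hi => hC i hi (s N) (hs N) x⟩
  tendsto x := by
    refine tendsto_const_nhds.congr' ?_
    have hsx : Tendsto (fun N => s N • x) atTop (𝓝 0) := by simpa using hs₀.smul_const x
    filter_upwards [hsx.eventually hκ₁.eventually_nhds] with N hN
    refine ((pd_iterate_eventuallyEq j ?_ k).eq_of_nhds).symm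
    filter_upwards [(continuous_const_smul (s N)).continuousAt.eventually hN] with y hy
    rw [hy, one_mul]

theorem carlemanEstimate_of_memLp (hγ : 0 ≤ γ) (hf : ContDiff ℝ 4 f)
    (hL2 : ∀ j, ∀ k ≤ 4, MemLp ((pd j)^[k] f) 2 (carlemanMeasure m c γ)) :
    CarlemanEstimate m c γ f := by
  let φ : ContDiffBump (0 : EuclideanSpace ℝ (Fin n)) := ⟨1, 2, one_pos, one_lt_two⟩
  let κ : EuclideanSpace ℝ (Fin n) → ℂ := fun x => (φ x : ℂ)
  have hκ : ContDiff ℝ 4 κ := Complex.ofRealCLM.contDiff.comp φ.contDiff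
  have hκs : HasCompactSupport κ :=
    φ.hasCompactSupport.comp_left (g := fun t : ℝ => (t : ℂ)) Complex.ofReal_zero
  have hκ₁ : ∀ᶠ x in 𝓝 0, κ x = 1 :=
    φ.eventuallyEq_one.mono fun x hx => by simp only [κ, hx]; simp
  let s : ℕ → ℝ := fun N => 1 / (N + 1)
  have hs_pos : ∀ N, 0 < s N := fun N => by positivity
  have hs : ∀ N, |s N| ≤ 1 := fun N => by
    rw [abs_of_pos (hs_pos N)]
    exact div_le_one_of_le₀ (by simp) (by positivity)
  have hscaled : ∀ N, ContDiff ℝ 4 fun x => κ (s N • x) := fun N =>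
    hκ.comp (contDiff_const_smul (s N))
  refine .of_tendstoDominated (F := fun N x => κ (s N • x) * f x) (fun N => ?_) fun j k hk => ?_
  · exact carlemanEstimate_of_hasCompactSupport hγ ((hscaled N).mul hf)
      (hκs.comp_homeomorph (Homeomorph.smulOfNeZero (s N) (hs_pos N).ne')).mul_right
  · have hk4 : (k : WithTop ℕ∞) ≤ 4 := by exact_mod_cast hk
    exact tendstoDominated_cutoff (hκ.of_le hk4) hκs hκ₁ hs tendsto_one_div_add_atTop_nhds_zero_nat
      (hf.of_le hk4) fun i hi => hL2 j i (hi.trans hk)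

end Extension

section UniqueContinuation

open Filter
open scoped Topology

lemma sq_add_sum_le {ι : Type*} [Fintype ι] (t : ℝ) (f : ι → ℝ) :
    (t + ∑ i, f i) ^ 2 ≤ (Fintype.card ι + 1) * (t ^ 2 + ∑ i, f i ^ 2) := by
  have cauchy_schwarz := sq_sum_le_card_mul_sum_sq (s := Finset.univ)
    (f := fun i : Option ι => i.elim t f)
  simpa using cauchy_schwarz

lemma setIntegral_norm_sq_le {α ι F : Type*} [MeasurableSpace α] [Fintype ι]
    [NormedAddCommGroup F] {μ : Measure α} {p f : α → F} {g : ι → α → F} {M : ℝ} {S : Set α}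
    (hS : MeasurableSet S) (hf : MemLp f 2 μ) (hg : ∀ i, MemLp (g i) 2 μ)
    (hp : ∀ᵐ x ∂μ, x ∈ S → ‖p x‖ ≤ M * (‖f x‖ + ∑ i, ‖g i x‖)) :
    ∫ x in S, ‖p x‖ ^ 2 ∂μ ≤ M ^ 2 * (Fintype.card ι + 1) *
      (∫ x, ‖f x‖ ^ 2 ∂μ + ∑ i, ∫ x, ‖g i x‖ ^ 2 ∂μ) := by
  have hf₂ : Integrable (fun x => ‖f x‖ ^ 2) μ := hf.norm.integrable_sq
  have hg₂ : ∀ i ∈ Finset.univ, Integrable (fun x => ‖g i x‖ ^ 2) μ :=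
    fun i _ => (hg i).norm.integrable_sq
  have hfg := (hf₂.add (integrable_finsetSum _ hg₂)).const_mul (M ^ 2 * (Fintype.card ι + 1))
  calc ∫ x in S, ‖p x‖ ^ 2 ∂μ
      ≤ ∫ x in S, M ^ 2 * (Fintype.card ι + 1) * (‖f x‖ ^ 2 + ∑ i, ‖g i x‖ ^ 2) ∂μ := by
        refine integral_mono_of_nonneg (.of_forall fun x => by positivity) hfg.integrableOn
          ((ae_restrict_iff' hS).2 (hp.mono fun x hx hxS => ?_))
        calc ‖p x‖ ^ 2 ≤ (M * (‖f x‖ + ∑ i, ‖g i x‖)) ^ 2 :=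
              pow_le_pow_left₀ (norm_nonneg _) (hx hxS) 2
          _ = M ^ 2 * (‖f x‖ + ∑ i, ‖g i x‖) ^ 2 := mul_pow _ _ 2
          _ ≤ M ^ 2 * ((Fintype.card ι + 1) * (‖f x‖ ^ 2 + ∑ i, ‖g i x‖ ^ 2)) :=
              mul_le_mul_of_nonneg_left (sq_add_sum_le _ _) (sq_nonneg M)
          _ = M ^ 2 * (Fintype.card ι + 1) * (‖f x‖ ^ 2 + ∑ i, ‖g i x‖ ^ 2) :=
              (mul_assoc _ _ _).symm
    _ ≤ ∫ x, M ^ 2 * (Fintype.card ι + 1) * (‖f x‖ ^ 2 + ∑ i, ‖g i x‖ ^ 2) ∂μ :=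
        setIntegral_le_integral hfg (.of_forall fun x => by positivity)
    _ = _ := by rw [integral_const_mul, integral_add hf₂ (integrable_finsetSum _ hg₂),
        integral_finsetSum _ hg₂]

lemma nonpos_of_forall_exp_mul_le {s t I C : ℝ} (hst : s < t)
    (h : ∀ᶠ γ in atTop, Real.exp (γ * t) * I ≤ C * Real.exp (γ * s)) : I ≤ 0 := by
  have decay : Tendsto (fun γ => C * Real.exp (-(γ * (t - s)))) atTop (𝓝 0) := by
    simpa using (Real.tendsto_exp_neg_atTop_nhds_zero.comp
      (tendsto_id.atTop_mul_const (sub_pos.2 hst))).const_mul C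
  refine ge_of_tendsto decay (h.mono fun γ hγ => ?_)
  have exp_eq : Real.exp (-(γ * (t - s))) = Real.exp (γ * s) / Real.exp (γ * t) := by
    rw [← Real.exp_sub]
    ring_nf
  rw [exp_eq, ← mul_div_assoc, le_div_iff₀ (Real.exp_pos _), mul_comm I]
  exact hγ

variable {n : ℕ} {m : Fin n} {c γ r M : ℝ} {w : EuclideanSpace ℝ (Fin n) → ℂ}

lemma memLp_quarticOp {μ : Measure (EuclideanSpace ℝ (Fin n))}
    (hw : ∀ j, MemLp ((pd j)^[4] w) 2 μ) : MemLp (quarticOp w) 2 μ :=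
  memLp_finsetSum _ fun j _ => hw j

lemma CarlemanEstimate.mul_integral_add_sum_le (h : CarlemanEstimate m c γ w) (hγ : 1 ≤ γ) :
    γ * (∫ x, ‖w x‖ ^ 2 ∂carlemanMeasure m c γ +
        ∑ j, ∫ x, ‖pd j w x‖ ^ 2 ∂carlemanMeasure m c γ) ≤
      (n + 1) * ∫ x, ‖quarticOp w x‖ ^ 2 ∂carlemanMeasure m c γ := by
  have le_pow : ∀ k ≠ 0, ∀ I : ℝ, 0 ≤ I → γ * I ≤ γ ^ k * I := fun k hk I hI =>
    mul_le_mul_of_nonneg_right (le_self_pow₀ hγ hk) hI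
  have integral_sq_nonneg (g : EuclideanSpace ℝ (Fin n) → ℂ) :
      0 ≤ ∫ x, ‖g x‖ ^ 2 ∂carlemanMeasure m c γ := integral_nonneg fun x => sq_nonneg _
  rw [mul_add, Finset.mul_sum, add_comm, add_mul, one_mul]
  refine add_le_add ?_ ((le_pow 4 (by simp) _ (integral_sq_nonneg w)).trans h.1)
  simpa using Finset.sum_le_card_nsmul Finset.univ _ _
    fun j _ => (le_pow 3 (by simp) _ (integral_sq_nonneg (pd j w))).trans (h.2 j)

/-- Where `|x m - c| > r` the differential inequality lets the Carleman estimate absorb half of the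
left-hand side; where `|x m - c| ≤ r` the weight is at most `exp (γ r² / 2)`. -/
lemma integral_norm_sq_quarticOp_le (hγ : 1 ≤ γ) (hM : 2 * (M ^ 2 * (n + 1) ^ 2) ≤ γ)
    (hw : ContDiff ℝ 4 w)
    (hL2 : ∀ j, ∀ k ≤ 4, MemLp ((pd j)^[k] w) 2 (carlemanMeasure m c γ))
    (hP : MemLp (quarticOp w) 2)
    (hineq : ∀ᵐ x, r < |x m - c| → ‖quarticOp w x‖ ≤ M * (‖w x‖ + ∑ j, ‖pd j w x‖)) :
    ∫ x, ‖quarticOp w x‖ ^ 2 ∂carlemanMeasure m c γ ≤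
      2 * (Real.exp (γ * r ^ 2 / 2) * ∫ x, ‖quarticOp w x‖ ^ 2) := by
  have hγ₀ : 0 < γ := one_pos.trans_le hγ
  set A := {x : EuclideanSpace ℝ (Fin n) | |x m - c| ≤ r}
  have hA : MeasurableSet A := (isClosed_le
    ((contDiff_coord m (k := 0)).continuous.sub continuous_const).abs
    continuous_const).measurableSet
  have hP₂ : Integrable (fun x => ‖quarticOp w x‖ ^ 2) := hP.norm.integrable_sq
  have inner_le : ∫ x in A, ‖quarticOp w x‖ ^ 2 ∂carlemanMeasure m c γ ≤
      Real.exp (γ * r ^ 2 / 2) * ∫ x, ‖quarticOp w x‖ ^ 2 :=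
    (setIntegral_carlemanMeasure_le hγ₀.le hA (fun x hx => hx) (fun x => sq_nonneg _)
      hP₂.integrableOn).trans (mul_le_mul_of_nonneg_left
        (setIntegral_le_integral hP₂ (.of_forall fun x => sq_nonneg _)) (Real.exp_nonneg _))
  have outer_le := setIntegral_norm_sq_le hA.compl (hL2 m 0 (by simp))
    (fun j => hL2 j 1 (by simp)) ((withDensity_absolutelyContinuous _ _).ae_le
      (hineq.mono fun x hx hxA => hx (not_le.1 hxA)))
  have carleman := (carlemanEstimate_of_memLp hγ₀.le hw hL2).mul_integral_add_sum_le hγ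
  have split := integral_add_compl hA
    (memLp_quarticOp fun j => hL2 j 4 le_rfl).norm.integrable_sq
  rw [Fintype.card_fin] at outer_le
  simp only [Function.iterate_zero, id_eq, Function.iterate_one] at outer_le
  set S := ∫ x, ‖w x‖ ^ 2 ∂carlemanMeasure m c γ +
    ∑ j, ∫ x, ‖pd j w x‖ ^ 2 ∂carlemanMeasure m c γ
  set K := ∫ x, ‖quarticOp w x‖ ^ 2 ∂carlemanMeasure m c γ
  have : 0 ≤ K := integral_nonneg fun x => sq_nonneg _
  have absorbed : M ^ 2 * (n + 1) * S ≤ K / 2 := by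
    refine le_of_mul_le_mul_left ?_ hγ₀
    calc γ * (M ^ 2 * (n + 1) * S) = M ^ 2 * (n + 1) * (γ * S) := by ring
      _ ≤ M ^ 2 * (n + 1) * ((n + 1) * K) := by gcongr
      _ = 2 * (M ^ 2 * (n + 1) ^ 2) * (K / 2) := by ring
      _ ≤ γ * (K / 2) := by gcongr
  linarith

theorem eq_zero_of_norm_quarticOp_le (hr : 0 ≤ r) (hw : ContDiff ℝ 4 w)
    (hL2 : ∀ γ, 0 ≤ γ → ∀ j, ∀ k ≤ 4, MemLp ((pd j)^[k] w) 2 (carlemanMeasure m c γ))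
    (hineq : ∀ᵐ x, r < |x m - c| → ‖quarticOp w x‖ ≤ M * (‖w x‖ + ∑ j, ‖pd j w x‖))
    {x : EuclideanSpace ℝ (Fin n)} (hx : r < |x m - c|) : w x = 0 := by
  obtain ⟨ρ, hrρ, hρx⟩ := exists_between hx
  set U := {x : EuclideanSpace ℝ (Fin n) | ρ < |x m - c|}
  have hU : IsOpen U := isOpen_lt continuous_const
    ((contDiff_coord m (k := 0)).continuous.sub continuous_const).abs
  have hL2_volume : ∀ j, ∀ k ≤ 4, MemLp ((pd j)^[k] w) 2 := by
    simpa only [carlemanMeasure_zero] using hL2 0 le_rfl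
  have hP : MemLp (quarticOp w) 2 := memLp_quarticOp fun j => hL2_volume j 4 le_rfl
  have integral_le : ∫ x in U, ‖w x‖ ^ 2 ≤ 0 := by
    refine nonpos_of_forall_exp_mul_le (s := r ^ 2 / 2) (t := ρ ^ 2 / 2)
      (C := 2 * ∫ x, ‖quarticOp w x‖ ^ 2) (by gcongr) ?_
    filter_upwards [eventually_ge_atTop 1, eventually_ge_atTop (2 * (M ^ 2 * (n + 1) ^ 2))]
      with γ hγ hγM
    have hγ₀ : 0 ≤ γ := zero_le_one.trans hγ
    rw [← mul_div_assoc, ← mul_div_assoc]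
    calc Real.exp (γ * ρ ^ 2 / 2) * ∫ x in U, ‖w x‖ ^ 2
        ≤ ∫ x, ‖w x‖ ^ 2 ∂carlemanMeasure m c γ :=
          exp_mul_setIntegral_le hγ₀ hU.measurableSet (hr.trans hrρ.le) (fun x hx => le_of_lt hx)
            (fun x => sq_nonneg _) (hL2 γ hγ₀ m 0 (by simp)).norm.integrable_sq
      _ ≤ γ ^ 4 * ∫ x, ‖w x‖ ^ 2 ∂carlemanMeasure m c γ :=
          le_mul_of_one_le_left (integral_nonneg fun x => sq_nonneg _) (one_le_pow₀ hγ)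
      _ ≤ ∫ x, ‖quarticOp w x‖ ^ 2 ∂carlemanMeasure m c γ :=
          (carlemanEstimate_of_memLp hγ₀ hw (hL2 γ hγ₀)).1
      _ ≤ 2 * (Real.exp (γ * r ^ 2 / 2) * ∫ x, ‖quarticOp w x‖ ^ 2) :=
          integral_norm_sq_quarticOp_le hγ hγM hw (hL2 γ hγ₀) hP hineq
      _ = _ := by ring
  have integral_eq : ∫ x in U, ‖w x‖ ^ 2 = 0 :=
    integral_le.antisymm (integral_nonneg fun x => sq_nonneg _)
  have integrable : Integrable fun x => ‖w x‖ ^ 2 := (hL2_volume m 0 (by simp)).norm.integrable_sq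
  rw [integral_eq_zero_iff_of_nonneg (fun x => sq_nonneg _) integrable.integrableOn] at integral_eq
  have ae_eq_zero : w =ᵐ[volume.restrict U] 0 :=
    integral_eq.mono fun x hx => by simpa using hx
  exact Measure.eqOn_open_of_ae_eq ae_eq_zero hU hw.continuous.continuousOn
    continuousOn_const hρx

end UniqueContinuation

section Slab

open Filter
open scoped ContDiff Topology

/-- The layer `a < x m < b` between two parallel hyperplanes. -/
def slab {n : ℕ} (m : Fin n) (a b : ℝ) : Set (EuclideanSpace ℝ (Fin n)) :=
  {x | a < x m ∧ x m < b}

lemma isOpen_slab {n : ℕ} (m : Fin n) (a b : ℝ) : IsOpen (slab m a b) :=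
  isOpen_Ioo.preimage (contDiff_coord m (k := 0)).continuous

lemma exists_contDiff_tsupport_subset_Ioo {a b δ : ℝ} (hδ : 0 < δ) (hab : 2 * δ < b - a) :
    ∃ φ : ℝ → ℂ, ContDiff ℝ ∞ φ ∧ HasCompactSupport φ ∧ tsupport φ ⊆ Ioo a b ∧
      ∀ t ∈ Ioo (a + δ) (b - δ), φ t = 1 := by
  let φ : ContDiffBump ((a + b) / 2) :=
    ⟨(b - a) / 2 - δ, (b - a) / 2 - δ / 2, by linarith, by linarith⟩
  have hsupp : tsupport (fun t => (φ t : ℂ)) ⊆ tsupport φ :=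
    tsupport_comp_subset Complex.ofReal_zero φ
  refine ⟨fun t => (φ t : ℂ), Complex.ofRealCLM.contDiff.comp φ.contDiff,
    φ.hasCompactSupport.of_isClosed_subset (isClosed_tsupport _) hsupp,
    hsupp.trans ?_, fun t ht => ?_⟩
  · rw [φ.tsupport_eq, Real.closedBall_eq_Icc]
    exact Icc_subset_Ioo (by dsimp only [φ]; linarith) (by dsimp only [φ]; linarith)
  · have : t ∈ Metric.closedBall ((a + b) / 2) φ.rIn := by
      rw [Real.closedBall_eq_Icc]
      exact ⟨by dsimp only [φ]; linarith [ht.1], by dsimp only [φ]; linarith [ht.2]⟩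
    exact congrArg Complex.ofReal (φ.one_of_mem_closedBall this)

variable {n : ℕ} {m j : Fin n} {a b γ δ ε M : ℝ} {k : ℕ} {φ : ℝ → ℂ}
  {u v : EuclideanSpace ℝ (Fin n) → ℂ} {x : EuclideanSpace ℝ (Fin n)}

lemma tsupport_coord_mul_subset (hφ : tsupport φ ⊆ Ioo a b) :
    tsupport (fun y => φ (y m) * u y) ⊆ slab m a b :=
  (tsupport_mul_subset_left.trans (tsupport_comp_subset_preimage φ
    (contDiff_coord m (k := 0)).continuous)).trans (preimage_mono hφ)

lemma contDiff_coord_mul (hφ : ContDiff ℝ k φ) (hsupp : tsupport φ ⊆ Ioo a b)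
    (hu : ContDiffOn ℝ k u (slab m a b)) : ContDiff ℝ k fun y => φ (y m) * u y :=
  (contMDiff_of_tsupport fun _ hx => ((hφ.comp (contDiff_coord m)).contDiffAt.mul
    (hu.contDiffAt ((isOpen_slab m a b).mem_nhds
      (tsupport_coord_mul_subset hsupp hx)))).contMDiffAt).contDiff

lemma exists_bound_iteratedDeriv (hφ : ContDiff ℝ k φ) (hs : HasCompactSupport φ) :
    ∃ C, ∀ t, ‖iteratedDeriv k φ t‖ ≤ C := by
  obtain ⟨C, hC⟩ := (hs.iteratedFDeriv (𝕜 := ℝ) k).exists_bound_of_continuous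
    (hφ.continuous_iteratedFDeriv le_rfl)
  exact ⟨C, fun t => norm_iteratedFDeriv_eq_norm_iteratedDeriv.symm.trans_le (hC t)⟩

lemma memLp_pd_iterate_coord_mul (hγ : 0 ≤ γ) (hφ : ContDiff ℝ k φ) (hs : HasCompactSupport φ)
    (hsupp : tsupport φ ⊆ Ioo a b) (hu : ContDiffOn ℝ k u (slab m a b))
    (hL2 : ∀ i ≤ k, MemLp ((pd j)^[i] u) 2 (volume.restrict (slab m a b))) :
    MemLp ((pd j)^[k] fun y => φ (y m) * u y) 2 (carlemanMeasure m a γ) := by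
  have hslab := (isOpen_slab m a b).measurableSet
  have support_subset : Function.support ((pd j)^[k] fun y => φ (y m) * u y) ⊆ slab m a b :=
    (subset_tsupport _).trans ((tsupport_pd_iterate_subset j _ k).trans
      (tsupport_coord_mul_subset hsupp))
  have hbound : ∀ i ≤ k, ∃ C, ∀ t, ‖iteratedDeriv i φ t‖ ≤ C := fun i hi =>
    exists_bound_iteratedDeriv (hφ.of_le (by exact_mod_cast hi)) hs
  choose! C hC using hbound
  rw [← Set.indicator_eq_self.2 support_subset, memLp_indicator_iff_restrict hslab]
  refine MemLp.of_measure_le_smul ENNReal.ofReal_ne_top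
    (carlemanMeasure_restrict_le (r := b - a) hγ hslab fun x hx => ?_) ?_
  · rw [abs_of_pos (sub_pos.2 hx.1)]
    exact sub_le_sub_right hx.2.le a
  · refine (memLp_leibniz_bound hL2 C).mono'
      (continuous_pd_iterate j (contDiff_coord_mul hφ hsupp hu)).aestronglyMeasurable
      ((ae_restrict_iff' hslab).2 (.of_forall fun x hx => ?_))
    exact norm_pd_iterate_mul_le j (hφ.comp (contDiff_coord m)).contDiffAt
      (hu.contDiffAt ((isOpen_slab m a b).mem_nhds hx)) fun i hi =>
        (norm_pd_iterate_comp_coord_le j (hφ.of_le (by exact_mod_cast hi)) m x).trans (hC i hi _)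

lemma norm_quarticOp_le_iff_of_eventuallyEq (h : u =ᶠ[𝓝 x] v) :
    ‖quarticOp u x‖ ≤ M * (‖u x‖ + ∑ j, ‖pd j u x‖) ↔
      ‖quarticOp v x‖ ≤ M * (‖v x‖ + ∑ j, ‖pd j v x‖) := by
  have hpd (j : Fin n) : pd j u x = pd j v x := (pd_iterate_eventuallyEq j h 1).eq_of_nhds
  have hquartic : quarticOp u x = quarticOp v x :=
    Finset.sum_congr rfl fun j _ => (pd_iterate_eventuallyEq j h 4).eq_of_nhds
  simp only [hpd, hquartic, h.eq_of_nhds]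

lemma norm_quarticOp_zero_le :
    ‖quarticOp 0 x‖ ≤ M * (‖(0 : EuclideanSpace ℝ (Fin n) → ℂ) x‖ + ∑ j, ‖pd j 0 x‖) := by
  have pd_zero (j : Fin n) : pd j 0 = 0 := by
    ext x
    simp [pd]
  simp [quarticOp, pd_zero]

lemma norm_quarticOp_coord_mul_le (hδ : 0 < δ) (hδε : δ < ε) (hsupp : tsupport φ ⊆ Ioo a b)
    (hφ₁ : ∀ t ∈ Ioo (a + δ) (b - δ), φ t = 1)
    (hineq : x ∈ slab m a b → ‖quarticOp u x‖ ≤ M * (‖u x‖ + ∑ j, ‖pd j u x‖))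
    (hvan : ∀ y ∈ slab m a b, b - ε < y m → u y = 0) (hx : δ < |x m - a|) :
    ‖quarticOp (fun y => φ (y m) * u y) x‖ ≤
      M * (‖φ (x m) * u x‖ + ∑ j, ‖pd j (fun y => φ (y m) * u y) x‖) := by
  have hcoord : ContinuousAt (fun y : EuclideanSpace ℝ (Fin n) => y m) x :=
    (contDiff_coord m (k := 0)).continuous.continuousAt
  by_cases hmid : x m ∈ Ioo (a + δ) (b - δ)
  · have hxslab : x ∈ slab m a b := tsupport_coord_mul_subset (u := 1) hsupp
      (subset_tsupport _ (by simp [hφ₁ _ hmid]))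
    refine (norm_quarticOp_le_iff_of_eventuallyEq (v := u) ?_).2 (hineq hxslab)
    filter_upwards [hcoord.eventually (isOpen_Ioo.mem_nhds hmid)] with y hy
    rw [hφ₁ _ hy, one_mul]
  · refine (norm_quarticOp_le_iff_of_eventuallyEq (v := 0) ?_).2 norm_quarticOp_zero_le
    have houter : x m < a ∨ b - ε < x m := by
      rcases lt_abs.1 hx with hxa | hxa
      · have := not_lt.1 fun hxb => hmid ⟨lt_sub_iff_add_lt'.1 hxa, hxb⟩
        exact .inr (by linarith)
      · exact .inl (by linarith)
    filter_upwards [hcoord.eventually ((isOpen_Iio.union isOpen_Ioi).mem_nhds houter)] with y hy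
    by_cases hφy : φ (y m) = 0
    · simp [hφy]
    · have hyslab : y ∈ slab m a b := hsupp (subset_tsupport φ hφy)
      simp [hvan y hyslab (hy.resolve_left (not_lt.2 hyslab.1.le))]

lemma norm_quarticOp_le_of_opL_eq_zero {A : EuclideanSpace ℝ (Fin n) → Fin n → ℂ}
    {q : EuclideanSpace ℝ (Fin n) → ℂ} {MA Mq : ℝ} (hA : ‖A x‖ ≤ MA) (hq : ‖q x‖ ≤ Mq)
    (h : opL A q u x = 0) :
    ‖quarticOp u x‖ ≤ max MA Mq * (‖u x‖ + ∑ j, ‖pd j u x‖) := by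
  have quarticOp_eq : quarticOp u x = Complex.I * ∑ j, A x j * pd j u x - q x * u x := by
    rw [quarticOp]
    rw [opL] at h
    linear_combination h
  have norm_first_order_le : ‖∑ j, A x j * pd j u x‖ ≤ max MA Mq * ∑ j, ‖pd j u x‖ := by
    rw [Finset.mul_sum]
    refine norm_sum_le_of_le _ fun j _ => ?_
    rw [norm_mul]
    gcongr
    exact (norm_le_pi_norm (A x) j).trans (hA.trans (le_max_left _ _))
  have norm_zeroth_order_le : ‖q x * u x‖ ≤ max MA Mq * ‖u x‖ := by
    rw [norm_mul]
    gcongr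
    exact hq.trans (le_max_right _ _)
  calc ‖quarticOp u x‖ ≤ ‖∑ j, A x j * pd j u x‖ + ‖q x * u x‖ := by
        rw [quarticOp_eq]
        exact (norm_sub_le _ _).trans_eq (by simp)
    _ ≤ max MA Mq * ∑ j, ‖pd j u x‖ + max MA Mq * ‖u x‖ :=
        add_le_add norm_first_order_le norm_zeroth_order_le
    _ = _ := by ring

lemma derivsL2.memLp {Ω : Set (EuclideanSpace ℝ (Fin n))} (h : derivsL2 Ω u) (hΩ : IsOpen Ω)
    (hu : ContDiffOn ℝ 4 u Ω) (hk : k ≤ 4) :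
    MemLp ((pd j)^[k] u) 2 (volume.restrict Ω) := by
  have hcont := continuousOn_pd_iterate j hΩ (hu.of_le (by exact_mod_cast hk))
  rw [memLp_two_iff_integrable_sq_norm (hcont.aestronglyMeasurable hΩ.measurableSet),
    ← foldr_replicate_pd]
  exact h _ (by simpa using hk)

end Slab

theorem ucp_across_hyperplane_general {n : ℕ} {m : Fin n} {a b ε M : ℝ}
    {u : EuclideanSpace ℝ (Fin n) → ℂ} (hu : ContDiffOn ℝ 4 u (slab m a b))
    (hL2 : ∀ j, ∀ k ≤ 4, MemLp ((pd j)^[k] u) 2 (volume.restrict (slab m a b)))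
    (hineq : ∀ᵐ x, x ∈ slab m a b → ‖quarticOp u x‖ ≤ M * (‖u x‖ + ∑ j, ‖pd j u x‖))
    (hε : 0 < ε) (hvan : ∀ x ∈ slab m a b, b - ε < x m → u x = 0) :
    ∀ x ∈ slab m a b, u x = 0 := by
  rintro x ⟨hxa, hxb⟩
  obtain ⟨δ, hδ, hδ_lt⟩ := exists_between
    (lt_min hε (lt_min (sub_pos.2 hxa) (sub_pos.2 hxb)))
  obtain ⟨hδε, hδa, hδb⟩ : δ < ε ∧ δ < x m - a ∧ δ < b - x m := by simpa using hδ_lt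
  obtain ⟨φ, hφ, hφs, hsupp, hφ₁⟩ :=
    exists_contDiff_tsupport_subset_Ioo (a := a) (b := b) hδ (by linarith)
  have hφ' (k : ℕ) : ContDiff ℝ k φ := hφ.of_le ENat.LEInfty.out
  have cutoff_eq_zero : φ (x m) * u x = 0 :=
    eq_zero_of_norm_quarticOp_le (c := a) hδ.le (contDiff_coord_mul (hφ' 4) hsupp hu)
      (fun γ hγ j k hk => memLp_pd_iterate_coord_mul hγ (hφ' k) hφs hsupp
        (hu.of_le (by exact_mod_cast hk)) fun i hi => hL2 j i (hi.trans hk))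
      (hineq.mono fun y hy => norm_quarticOp_coord_mul_le hδ hδε hsupp hφ₁ hy hvan)
      (hδa.trans_le (le_abs_self _))
  rwa [hφ₁ _ ⟨by linarith, by linarith⟩, one_mul] at cutoff_eq_zero

/-- Proposition 2.2: UCP across a hyperplane. -/
theorem ucp_across_hyperplane
    (n : ℕ) (hn : 2 ≤ n) (a b : ℝ) (hab : a < b)
    (Ω : Set (EuclideanSpace ℝ (Fin n)))
    (hΩ : Ω = {x : EuclideanSpace ℝ (Fin n) | a < x ⟨n - 1, by omega⟩ ∧ x ⟨n - 1, by omega⟩ < b})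
    (A : EuclideanSpace ℝ (Fin n) → Fin n → ℂ) (q : EuclideanSpace ℝ (Fin n) → ℂ)
    (hA : BddLipOn Ω A) (hq : BddMeasOn Ω q)
    (u : EuclideanSpace ℝ (Fin n) → ℂ)
    (hu : ContDiffOn ℝ 4 u Ω) (huL2 : derivsL2 Ω u)
    (heq : ∀ᵐ x ∂(volume : Measure (EuclideanSpace ℝ (Fin n))), x ∈ Ω → opL A q u x = 0)
    (ε : ℝ) (hε : 0 < ε)
    (hvan : ∀ x ∈ Ω, b - ε < x ⟨n - 1, by omega⟩ → u x = 0) :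
    ∀ x ∈ Ω, u x = 0 := by
  obtain ⟨⟨MA, hMA⟩, -⟩ := hA
  obtain ⟨-, Mq, hMq⟩ := hq
  subst hΩ
  exact ucp_across_hyperplane_general hu
    (fun j k hk => huL2.memLp (isOpen_slab _ a b) hu hk)
    (heq.mono fun x hx hxΩ => norm_quarticOp_le_of_opL_eq_zero (hMA x hxΩ) (hMq x hxΩ) (hx hxΩ))
    hε hvan
end
end
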